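/- arXiv:1302.2638 — 3 statements merged into one kernel-verified Lean document; each statement's English description precedes it below -/
import Mathlib

section
/- Let β > 0, let N be a positive integer, let a > −1 and b > −1 be real, and let 0 ≤ l ≤ N. Then the Jacobi β-ensemble average of the l-th elementary symmetric polynomial is ⟨e_l⟩ = C(N,l) · ∏_{j=1}^{l} (a + 1 + (N−j)β/2)/(a + b + 2 + (2N−j−1)β/2), where C(N,l) is the binomial coefficient. Explicitly: ∫_{[0,1]^N} e_l(x) ∏_{i=1}^N x_i^a (1−x_i)^b ∏_{1≤j<k≤N} |x_k−x_j|^β dx divided by ∫_{[0,1]^N} ∏_{i=1}^N x_i^a (1−x_i)^b ∏_{1≤j<k≤N} |x_k−x_j|^β dx equals C(N,l) ∏_{j=1}^{l} (a+1+(N−j)β/2)/(a+b+2+(2N−j−1)β/2). -/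
open MeasureTheory

/-- The `l`-th elementary symmetric polynomial in `N` variables. -/
noncomputable def esym (N l : ℕ) (x : Fin N → ℝ) : ℝ :=
  ∑ S ∈ Finset.powersetCard l (Finset.univ : Finset (Fin N)), ∏ i ∈ S, x i

/-- The `β`-fold interaction term `∏_{j < k} |x_k - x_j|^β`. -/
noncomputable def interaction (N : ℕ) (β : ℝ) (x : Fin N → ℝ) : ℝ :=
  ∏ p ∈ Finset.univ.filter (fun p : Fin N × Fin N => p.1 < p.2), |x p.2 - x p.1| ^ β

/-!
Aomoto's method. Let `W` be the density, `T` a set of coordinates and `i ∉ T`. The derivative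
`∂ᵢ (xᵢ (1 - xᵢ) ∏_{k ∈ T} x_k · W)` integrates to zero over the cube, and expanding it produces
the singular terms `β xᵢ (1 - xᵢ) / (xᵢ - xⱼ)`, which are integrable against `W` because
`β - 1 > -1`. Symmetrising under `xᵢ ↔ xⱼ` removes the denominator: up to the factors of the
monomial other than `xⱼ`, the two copies of such a term add up to `1 - xᵢ - xⱼ` when `j ∉ T` and to
`-xᵢ xⱼ` when `j ∈ T`. As `W` is symmetric, this is a two-term recursion between the averages of
`∏_{k ∈ T} x_k` and `∏_{k ∈ T ∪ {i}} x_k`, so the average of a squarefree monomial depends only on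
its degree, and `e_l` is a sum of `C(N, l)` of them.
-/

theorem prod_comp_update_of_notMem {ι α M : Type*} [DecidableEq ι] [CommMonoid M] {s : Finset ι}
    {i : ι} (hi : i ∉ s) (g : α → M) (x : ι → α) (t : α) :
    ∏ j ∈ s, g (Function.update x i t j) = ∏ j ∈ s, g (x j) :=
  Finset.prod_congr rfl fun _ hj => by rw [Function.update_of_ne (ne_of_mem_of_not_mem hj hi)]

section ProductMeasure

variable {ι : Type*} [Fintype ι] [DecidableEq ι]

theorem measurePreserving_update {α : ι → Type*} [∀ i, MeasurableSpace (α i)]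
    (μ : ∀ i, Measure (α i)) [∀ i, SigmaFinite (μ i)] (i : ι) [IsProbabilityMeasure (μ i)] :
    MeasurePreserving (fun p : (∀ j, α j) × α i => Function.update p.1 i p.2)
      ((Measure.pi μ).prod (μ i)) (Measure.pi μ) := by
  refine ⟨measurable_update', (Measure.pi_eq fun s hs => ?_).symm⟩
  have hpre : (fun p : (∀ j, α j) × α i => Function.update p.1 i p.2) ⁻¹' Set.univ.pi s =
      Set.univ.pi (Function.update s i Set.univ) ×ˢ s i := by
    ext p
    simp only [Set.mem_preimage, Set.mem_univ_pi, Set.mem_prod,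
      Function.forall_update_iff p.1 fun j y => y ∈ s j,
      Function.forall_update_iff s fun j t => p.1 j ∈ t, Set.mem_univ, true_and]
    exact and_comm
  rw [Measure.map_apply measurable_update' (.univ_pi hs), hpre, Measure.prod_prod, Measure.pi_pi,
    ← Finset.mul_prod_erase _ _ (Finset.mem_univ i), Function.update_self, measure_univ, one_mul,
    ← Finset.mul_prod_erase _ (fun j => μ j (s j)) (Finset.mem_univ i), mul_comm]
  congr 1
  refine Finset.prod_congr rfl fun j hj => ?_
  rw [Function.update_of_ne (Finset.ne_of_mem_erase hj)]

theorem integral_pi_eq_zero_of_integral_update_eq_zero {α : ι → Type*} {E : Type*}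
    [NormedAddCommGroup E] [NormedSpace ℝ E] [∀ i, MeasurableSpace (α i)]
    {μ : ∀ i, Measure (α i)} [∀ i, SigmaFinite (μ i)] (i : ι) [IsProbabilityMeasure (μ i)]
    {f : (∀ j, α j) → E} (hf : Integrable f (Measure.pi μ))
    (h : ∀ x, Integrable (fun t => f (Function.update x i t)) (μ i) →
      ∫ t, f (Function.update x i t) ∂μ i = 0) :
    ∫ x, f x ∂Measure.pi μ = 0 := by
  have hmp := measurePreserving_update μ i
  have hcomp := hmp.integrable_comp_of_integrable hf
  rw [← hmp.map_eq, integral_map hmp.aemeasurable (by rw [hmp.map_eq]; exact hf.1)]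
  exact (integral_prod _ hcomp).trans (integral_eq_zero_of_ae (hcomp.prod_right_ae.mono h))

end ProductMeasure

theorem measurePreserving_comp_perm {ι α : Type*} [Fintype ι] [MeasurableSpace α]
    (μ : Measure α) [SigmaFinite μ] (σ : Equiv.Perm ι) :
    MeasurePreserving (fun x : ι → α => x ∘ σ) (Measure.pi fun _ => μ)
      (Measure.pi fun _ => μ) := by
  convert! measurePreserving_piCongrLeft (fun _ : ι => μ) σ.symm using 1
  ext x i
  simpa using (MeasurableEquiv.piCongrLeft_apply_apply (β := fun _ => α) σ.symm x (σ i)).symm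

theorem integrable_comp_sub_mul {X : Type*} [MeasurableSpace X] {ν : Measure X} [SFinite ν]
    {φ : X → ℝ} (hφ : Measurable φ) {q : X → ℝ} (hq : Integrable q ν) {h : ℝ → ℝ}
    (hh : Integrable h) :
    Integrable (fun p : X × ℝ => q p.1 * h (p.2 - φ p.1)) (ν.prod volume) := by
  have hshear : MeasurePreserving (fun p : X × ℝ => (p.1, p.2 - φ p.1)) (ν.prod volume)
      (ν.prod volume) :=
    (MeasurePreserving.id ν).skew_product (by fun_prop)
      (.of_forall fun x => (measurePreserving_sub_right volume (φ x)).map_eq)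
  exact hshear.integrable_comp_of_integrable (hq.mul_prod hh)

theorem integrableOn_abs_rpow {r : ℝ} (hr : -1 < r) :
    IntegrableOn (fun u : ℝ => |u| ^ r) (Set.Icc (-1) 1) := by
  have hpos : IntervalIntegrable (fun u : ℝ => |u| ^ r) volume 0 1 := by
    refine (intervalIntegral.intervalIntegrable_rpow' hr).congr fun u hu => ?_
    rw [Set.uIoc_of_le zero_le_one] at hu
    simp only [abs_of_pos hu.1]
  have hneg : IntervalIntegrable (fun u : ℝ => |u| ^ r) volume (-1) 0 := by
    simpa using (IntervalIntegrable.iff_comp_neg (f := fun u : ℝ => |u| ^ r)).mp hpos.symm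
  rw [← intervalIntegrable_iff_integrableOn_Icc_of_le (by norm_num)]
  exact hneg.trans hpos

/-- The weight `t^a (1-t)^b` of the Jacobi polynomials on `[0, 1]`. -/
noncomputable def jacobiWeight (a b t : ℝ) : ℝ :=
  t ^ a * (1 - t) ^ b

@[fun_prop]
theorem measurable_jacobiWeight (a b : ℝ) : Measurable (jacobiWeight a b) := by
  unfold jacobiWeight; fun_prop

theorem jacobiWeight_pos (a b : ℝ) {t : ℝ} (ht : t ∈ Set.Ioo 0 1) : 0 < jacobiWeight a b t :=
  mul_pos (Real.rpow_pos_of_pos ht.1 a) (Real.rpow_pos_of_pos (sub_pos.mpr ht.2) b)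

theorem jacobiWeight_add_one (a b : ℝ) {t : ℝ} (ht : t ∈ Set.Ioo 0 1) :
    jacobiWeight (a + 1) (b + 1) t = t * (1 - t) * jacobiWeight a b t := by
  rw [jacobiWeight, jacobiWeight, Real.rpow_add_one ht.1.ne',
    Real.rpow_add_one (sub_pos.mpr ht.2).ne']
  ring

theorem jacobiWeight_le_one {a b : ℝ} (ha : 0 ≤ a) (hb : 0 ≤ b) {t : ℝ} (ht : t ∈ Set.Ioo 0 1) :
    jacobiWeight a b t ≤ 1 := by
  have h1t : 0 ≤ 1 - t := sub_nonneg.mpr ht.2.le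
  exact mul_le_one₀ (Real.rpow_le_one ht.1.le ht.2.le ha) (Real.rpow_nonneg h1t b)
    (Real.rpow_le_one h1t (sub_le_self 1 ht.1.le) hb)

theorem hasDerivAt_jacobiWeight_add_one (a b : ℝ) {t : ℝ} (ht : t ∈ Set.Ioo 0 1) :
    HasDerivAt (jacobiWeight (a + 1) (b + 1))
      ((a + 1 - (a + b + 2) * t) * jacobiWeight a b t) t := by
  have h1t : 1 - t ≠ 0 := (sub_pos.mpr ht.2).ne'
  have hleft := Real.hasDerivAt_rpow_const (p := a + 1) (Or.inl ht.1.ne')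
  have hright := ((hasDerivAt_id t).const_sub 1).rpow_const (p := b + 1) (Or.inl h1t)
  refine (hleft.mul hright).congr_deriv ?_
  simp only [id_eq, add_sub_cancel_right, jacobiWeight, Real.rpow_add_one ht.1.ne',
    Real.rpow_add_one h1t]
  ring

theorem integrableOn_jacobiWeight {a b : ℝ} (ha : -1 < a) (hb : -1 < b) :
    IntegrableOn (jacobiWeight a b) (Set.Icc 0 1) := by
  have hbeta := Complex.betaIntegral_convergent (u := ((a + 1 : ℝ) : ℂ)) (v := ((b + 1 : ℝ) : ℂ))
    (by simpa using by linarith) (by simpa using by linarith)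
  rw [intervalIntegrable_iff_integrableOn_Ioo_of_le zero_le_one] at hbeta
  rw [integrableOn_Icc_iff_integrableOn_Ioo]
  refine IntegrableOn.congr_fun hbeta.norm (fun t ht => ?_) measurableSet_Ioo
  have hcast : (1 : ℂ) - t = ((1 - t : ℝ) : ℂ) := by push_cast; rfl
  simp only [norm_mul, hcast, Complex.norm_cpow_eq_rpow_re_of_pos ht.1,
    Complex.norm_cpow_eq_rpow_re_of_pos (sub_pos.mpr ht.2)]
  simp [jacobiWeight]

theorem hasDerivAt_abs_sub_rpow (β : ℝ) {c t : ℝ} (h : t ≠ c) :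
    HasDerivAt (fun t => |t - c| ^ β) (|t - c| ^ β * (β / (t - c))) t := by
  have hne : t - c ≠ 0 := sub_ne_zero.mpr h
  have habs : |t - c| ≠ 0 := abs_ne_zero.mpr hne
  have hd : HasDerivAt (fun t => |t - c|) (SignType.sign (t - c) : ℝ) t := by
    simpa [Function.comp_def] using (hasDerivAt_abs hne).comp t ((hasDerivAt_id t).sub_const c)
  refine (hd.rpow_const (Or.inl habs)).congr_deriv ?_
  rw [Real.rpow_sub_one habs]
  rcases lt_or_gt_of_ne hne with hneg | hpos
  · rw [abs_of_neg hneg, sign_neg hneg, SignType.coe_neg_one, div_neg]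
    ring
  · rw [abs_of_pos hpos, sign_pos hpos, SignType.coe_one]
    ring

theorem hasDerivAt_prod_abs_sub_rpow {ι : Type*} (s : Finset ι) (β : ℝ) (y : ι → ℝ) {t : ℝ}
    (h : ∀ j ∈ s, t ≠ y j) :
    HasDerivAt (fun t => ∏ j ∈ s, |t - y j| ^ β)
      ((∏ j ∈ s, |t - y j| ^ β) * ∑ j ∈ s, β / (t - y j)) t := by
  classical
  refine (HasDerivAt.fun_finsetProd fun j hj => hasDerivAt_abs_sub_rpow β (h j hj)).congr_deriv ?_
  rw [Finset.mul_sum]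
  refine Finset.sum_congr rfl fun j hj => ?_
  rw [smul_eq_mul, ← mul_assoc, Finset.prod_erase_mul _ _ hj]

theorem integral_aomoto_eq_zero {ι : Type*} (s : Finset ι) (y : ι → ℝ) {β a b : ℝ}
    (hβ : 0 ≤ β) (ha : -1 < a) (hb : -1 < b)
    (hint : IntegrableOn (fun t => (a + 1 - (a + b + 2) * t +
      β * ∑ j ∈ s, t * (1 - t) / (t - y j)) * (jacobiWeight a b t * ∏ j ∈ s, |t - y j| ^ β))
      (Set.Icc 0 1)) :
    ∫ t in Set.Icc 0 1, (a + 1 - (a + b + 2) * t + β * ∑ j ∈ s, t * (1 - t) / (t - y j)) *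
      (jacobiWeight a b t * ∏ j ∈ s, |t - y j| ^ β) = 0 := by
  let G : ℝ → ℝ := fun t => jacobiWeight (a + 1) (b + 1) t * ∏ j ∈ s, |t - y j| ^ β
  have hcont : Continuous G := by
    have := Real.continuous_rpow_const (show 0 ≤ a + 1 by linarith)
    have := Real.continuous_rpow_const (show 0 ≤ b + 1 by linarith)
    have := Real.continuous_rpow_const hβ
    unfold G jacobiWeight
    fun_prop
  have hderiv : ∀ t ∈ Set.Ioo 0 1 \ y '' s, HasDerivAt G
      ((a + 1 - (a + b + 2) * t + β * ∑ j ∈ s, t * (1 - t) / (t - y j)) *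
        (jacobiWeight a b t * ∏ j ∈ s, |t - y j| ^ β)) t := by
    rintro t ⟨ht, hty⟩
    have hprod := hasDerivAt_prod_abs_sub_rpow s β y (t := t) fun j hj h => hty ⟨j, hj, h.symm⟩
    refine ((hasDerivAt_jacobiWeight_add_one a b ht).mul hprod).congr_deriv ?_
    simp only [jacobiWeight_add_one a b ht, div_eq_mul_inv, ← Finset.mul_sum]
    ring
  have hG0 : G 0 = 0 := by simp [G, jacobiWeight, Real.zero_rpow (by linarith : a + 1 ≠ 0)]
  have hG1 : G 1 = 0 := by simp [G, jacobiWeight, Real.zero_rpow (by linarith : b + 1 ≠ 0)]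
  rw [integral_Icc_eq_integral_Ioc, ← intervalIntegral.integral_of_le zero_le_one,
    integral_eq_of_hasDerivAt_off_countable_of_le G _ zero_le_one
      (s.countable_toSet.image y) hcont.continuousOn hderiv
      ((intervalIntegrable_iff_integrableOn_Icc_of_le zero_le_one).mpr hint), hG0, hG1, sub_zero]

section Interaction

variable {N : ℕ}

theorem interaction_eq_abs_det (β : ℝ) (x : Fin N → ℝ) :
    interaction N β x = |(Matrix.vandermonde x).det| ^ β := by
  rw [Matrix.det_vandermonde, interaction, Real.finsetProd_rpow _ _ (fun _ _ => abs_nonneg _),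
    ← Finset.abs_prod, Finset.prod_filter, ← Finset.univ_product_univ, Finset.prod_product]
  congr 2
  refine Finset.prod_congr rfl fun i _ => ?_
  rw [← Finset.prod_filter, Finset.filter_lt_eq_Ioi]

theorem interaction_comp_perm (β : ℝ) (σ : Equiv.Perm (Fin N)) (x : Fin N → ℝ) :
    interaction N β (x ∘ σ) = interaction N β x := by
  have hσ : Matrix.vandermonde (x ∘ σ) = (Matrix.vandermonde x).submatrix σ id := rfl
  rw [interaction_eq_abs_det, interaction_eq_abs_det, hσ, Matrix.det_permute, abs_mul]
  rcases Int.units_eq_one_or (Equiv.Perm.sign σ) with h | h <;> simp [h]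

@[fun_prop]
theorem measurable_interaction (N : ℕ) (β : ℝ) : Measurable (interaction N β) := by
  unfold interaction; fun_prop

theorem interaction_nonneg (β : ℝ) (x : Fin N → ℝ) : 0 ≤ interaction N β x :=
  Finset.prod_nonneg fun _ _ => Real.rpow_nonneg (abs_nonneg _) _

theorem interaction_pos (β : ℝ) {x : Fin N → ℝ} (hx : Function.Injective x) :
    0 < interaction N β x :=
  Finset.prod_pos fun _ hp =>
    Real.rpow_pos_of_pos (abs_pos.mpr (sub_ne_zero.mpr (hx.ne (Finset.mem_filter.mp hp).2.ne'))) _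

theorem abs_sub_rpow_le_one {β s t : ℝ} (hβ : 0 ≤ β) (hs : s ∈ Set.Icc 0 1)
    (ht : t ∈ Set.Icc 0 1) : |s - t| ^ β ≤ 1 :=
  Real.rpow_le_one (abs_nonneg _)
    (abs_le.mpr ⟨by linarith [hs.1, ht.2], by linarith [hs.2, ht.1]⟩) hβ

theorem interaction_le_one {β : ℝ} (hβ : 0 ≤ β) {x : Fin N → ℝ}
    (hx : ∀ i, x i ∈ Set.Icc 0 1) : interaction N β x ≤ 1 :=
  Finset.prod_le_one (fun _ _ => Real.rpow_nonneg (abs_nonneg _) _) fun _ _ =>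
    abs_sub_rpow_le_one hβ (hx _) (hx _)

theorem interaction_le_abs_sub_rpow {β : ℝ} (hβ : 0 ≤ β) {x : Fin N → ℝ}
    (hx : ∀ i, x i ∈ Set.Icc 0 1) {i j : Fin N} (hij : i ≠ j) :
    interaction N β x ≤ |x i - x j| ^ β := by
  wlog h : j < i generalizing i j
  · rw [abs_sub_comm]
    exact this hij.symm (hij.lt_or_gt.resolve_right h)
  have hmem : (j, i) ∈ Finset.univ.filter fun p : Fin N × Fin N => p.1 < p.2 := by simpa using h
  rw [interaction, ← Finset.mul_prod_erase _ _ hmem]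
  refine mul_le_of_le_one_right (Real.rpow_nonneg (abs_nonneg _) _) ?_
  exact Finset.prod_le_one (fun _ _ => Real.rpow_nonneg (abs_nonneg _) _) fun _ _ =>
    abs_sub_rpow_le_one hβ (hx _) (hx _)

theorem interaction_eq_prod_erase_mul (β : ℝ) (i : Fin N) (x : Fin N → ℝ) :
    interaction N β x = (∏ j ∈ Finset.univ.erase i, |x i - x j| ^ β) *
      ∏ p : Fin N × Fin N with p.1 < p.2 ∧ ¬(p.1 = i ∨ p.2 = i), |x p.2 - x p.1| ^ β := by
  rw [interaction, ← Finset.prod_filter_mul_prod_filter_not _ fun p => p.1 = i ∨ p.2 = i,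
    Finset.filter_filter, Finset.filter_filter]
  congr 1
  refine Finset.prod_nbij' (fun p => if p.1 = i then p.2 else p.1)
    (fun j => if i < j then (i, j) else (j, i)) ?_ ?_ ?_ ?_ ?_
  · rintro ⟨j, k⟩ h
    simp only [Finset.mem_filter, Finset.mem_univ, true_and] at h
    grind
  · intro j h
    simp only [Finset.mem_erase, Finset.mem_univ, and_true] at h
    grind
  · rintro ⟨j, k⟩ h
    simp only [Finset.mem_filter, Finset.mem_univ, true_and] at h
    grind
  · intro j h
    grind
  · rintro ⟨j, k⟩ h
    simp only [Finset.mem_filter, Finset.mem_univ, true_and] at h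
    grind [abs_sub_comm]

end Interaction

/-- Lebesgue measure on the unit cube `[0, 1]^N`, encoded as a product of probability measures so
that coordinates can be integrated out one at a time. -/
noncomputable def cubeMeasure (N : ℕ) : Measure (Fin N → ℝ) :=
  Measure.pi fun _ => volume.restrict (Set.Icc 0 1)

instance isProbabilityMeasure_restrict_Icc_zero_one :
    IsProbabilityMeasure ((volume : Measure ℝ).restrict (Set.Icc 0 1)) :=
  ⟨by simp⟩

instance isProbabilityMeasure_cubeMeasure (N : ℕ) : IsProbabilityMeasure (cubeMeasure N) := by
  unfold cubeMeasure; infer_instance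

theorem restrict_volume_cube (N : ℕ) :
    (volume : Measure (Fin N → ℝ)).restrict (Set.univ.pi fun _ => Set.Icc 0 1) =
      cubeMeasure N := by
  rw [volume_pi, Measure.restrict_pi_pi, cubeMeasure]

theorem ae_cubeMeasure_mem_Ioo (N : ℕ) : ∀ᵐ x ∂cubeMeasure N, ∀ i, x i ∈ Set.Ioo 0 1 := by
  refine ae_all_iff.mpr fun i => (Measure.tendsto_eval_ae_ae (i := i)).eventually ?_
  rw [← restrict_Ioo_eq_restrict_Icc]
  exact ae_restrict_mem measurableSet_Ioo

theorem ae_cubeMeasure_injective (N : ℕ) : ∀ᵐ x ∂cubeMeasure N, Function.Injective x := by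
  have hne : ∀ i j : Fin N, ∀ᵐ x ∂cubeMeasure N, x i = x j → i = j := fun i j => by
    rcases eq_or_ne i j with rfl | hij
    · simp
    let p : (Fin N → ℝ) →ₗ[ℝ] ℝ := .proj i - .proj j
    have hp : p.ker ≠ ⊤ := fun h => by
      have : p (Pi.single i 1) = 0 := by
        rw [← LinearMap.mem_ker, h]; trivial
      simp [p, hij.symm] at this
    rw [← restrict_volume_cube]
    refine ae_restrict_of_ae (measure_mono_null (fun x hx => ?_)
      (Measure.addHaar_submodule volume p.ker hp))
    simpa [p, sub_eq_zero, hij] using hx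
  filter_upwards [ae_all_iff.mpr fun i => ae_all_iff.mpr (hne i)] with x hx i j using hx i j

theorem integrable_prod_jacobiWeight {N : ℕ} (s : Finset (Fin N)) {a b : ℝ} (ha : -1 < a)
    (hb : -1 < b) :
    Integrable (fun x => ∏ i ∈ s, jacobiWeight a b (x i)) (cubeMeasure N) := by
  have hfactor : ∀ i, Integrable (fun t => if i ∈ s then jacobiWeight a b t else 1)
      (volume.restrict (Set.Icc 0 1)) := fun i => by
    split_ifs
    exacts [integrableOn_jacobiWeight ha hb, integrable_const 1]
  simpa only [Finset.prod_ite_mem, Finset.univ_inter] using! Integrable.fintype_prod hfactor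

theorem integrable_prod_jacobiWeight_mul_abs_sub_rpow {N : ℕ} {i j : Fin N} (hij : i ≠ j)
    {a b r : ℝ} (ha : -1 < a) (hb : -1 < b) (hr : -1 < r) :
    Integrable (fun x => (∏ k ∈ Finset.univ.erase i, jacobiWeight a b (x k)) * |x i - x j| ^ r)
      (cubeMeasure N) := by
  let h : ℝ → ℝ := (Set.Icc (-1) 1).indicator fun u => |u| ^ r
  have hh : Integrable h := (integrable_indicator_iff measurableSet_Icc).mpr
    (integrableOn_abs_rpow hr)
  have hmp := measurePreserving_update
    (fun _ : Fin N => (volume : Measure ℝ).restrict (Set.Icc 0 1)) i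
  refine (hmp.integrable_comp (Measurable.aestronglyMeasurable (by fun_prop))).mp ?_
  refine ((integrable_comp_sub_mul (measurable_pi_apply j)
    (integrable_prod_jacobiWeight (Finset.univ.erase i) ha hb) hh).mono_measure
    (Measure.prod_mono le_rfl Measure.restrict_le_self)).congr ?_
  filter_upwards [Measure.quasiMeasurePreserving_fst.ae (ae_cubeMeasure_mem_Ioo N),
    Measure.quasiMeasurePreserving_snd.ae (ae_restrict_mem measurableSet_Icc)] with p hp1 hp2
  have hmem : p.2 - p.1 j ∈ Set.Icc (-1) 1 :=
    ⟨by linarith [hp2.1, (hp1 j).2], by linarith [hp2.2, (hp1 j).1]⟩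
  simp only [Function.comp_apply, h, Set.indicator_of_mem hmem, Function.update_self,
    Function.update_of_ne hij.symm,
    prod_comp_update_of_notMem (Finset.notMem_erase i Finset.univ) (jacobiWeight a b)]

/-- The unnormalised density of the Jacobi `β`-ensemble. -/
noncomputable def jacobiDensity (N : ℕ) (β a b : ℝ) (x : Fin N → ℝ) : ℝ :=
  (∏ i, jacobiWeight a b (x i)) * interaction N β x

section JacobiDensity

variable {N : ℕ}

@[fun_prop]
theorem measurable_jacobiDensity (N : ℕ) (β a b : ℝ) : Measurable (jacobiDensity N β a b) := by
  unfold jacobiDensity; fun_prop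

theorem jacobiDensity_comp_perm (β a b : ℝ) (σ : Equiv.Perm (Fin N)) (x : Fin N → ℝ) :
    jacobiDensity N β a b (x ∘ σ) = jacobiDensity N β a b x := by
  rw [jacobiDensity, jacobiDensity, interaction_comp_perm]
  exact congrArg (· * _) (Equiv.prod_comp σ fun i => jacobiWeight a b (x i))

theorem ae_jacobiDensity_pos (N : ℕ) (β a b : ℝ) :
    ∀ᵐ x ∂cubeMeasure N, 0 < jacobiDensity N β a b x := by
  filter_upwards [ae_cubeMeasure_mem_Ioo N, ae_cubeMeasure_injective N] with x hx hinj
  exact mul_pos (Finset.prod_pos fun i _ => jacobiWeight_pos a b (hx i)) (interaction_pos β hinj)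

theorem exists_jacobiDensity_update_eq (β a b : ℝ) (x : Fin N → ℝ) (i : Fin N) :
    ∃ C, ∀ t, jacobiDensity N β a b (Function.update x i t) =
      C * (jacobiWeight a b t * ∏ j ∈ Finset.univ.erase i, |t - x j| ^ β) := by
  refine ⟨(∏ j ∈ Finset.univ.erase i, jacobiWeight a b (x j)) *
    ∏ p : Fin N × Fin N with p.1 < p.2 ∧ ¬(p.1 = i ∨ p.2 = i), |x p.2 - x p.1| ^ β, fun t => ?_⟩
  have hi : i ∉ Finset.univ.erase i := Finset.notMem_erase i _
  have hpairs : ∀ p ∈ Finset.univ.filter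
      (fun p : Fin N × Fin N => p.1 < p.2 ∧ ¬(p.1 = i ∨ p.2 = i)),
      |Function.update x i t p.2 - Function.update x i t p.1| ^ β = |x p.2 - x p.1| ^ β :=
    fun p hp => by
      obtain ⟨-, -, hpi⟩ := Finset.mem_filter.mp hp
      rw [Function.update_of_ne fun h => hpi (.inl h), Function.update_of_ne fun h => hpi (.inr h)]
  rw [jacobiDensity, interaction_eq_prod_erase_mul β i, Finset.prod_congr rfl hpairs,
    ← Finset.mul_prod_erase _ _ (Finset.mem_univ i), Function.update_self,
    prod_comp_update_of_notMem hi (jacobiWeight a b),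
    prod_comp_update_of_notMem hi fun u => |t - u| ^ β]
  ring

theorem integrable_jacobiDensity (N : ℕ) {β a b : ℝ} (hβ : 0 ≤ β) (ha : -1 < a) (hb : -1 < b) :
    Integrable (jacobiDensity N β a b) (cubeMeasure N) := by
  refine (integrable_prod_jacobiWeight Finset.univ ha hb).mul_bdd (c := 1)
    (measurable_interaction N β).aestronglyMeasurable ?_
  filter_upwards [ae_cubeMeasure_mem_Ioo N] with x hx
  rw [Real.norm_of_nonneg (interaction_nonneg β x)]
  exact interaction_le_one hβ fun i => Set.Ioo_subset_Icc_self (hx i)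

end JacobiDensity

/-- The Jacobi `β`-ensemble as an unnormalised measure on `Fin N → ℝ`. -/
noncomputable def jacobiEnsemble (N : ℕ) (β a b : ℝ) : Measure (Fin N → ℝ) :=
  (cubeMeasure N).withDensity fun x => ENNReal.ofReal (jacobiDensity N β a b x)

section JacobiEnsemble

variable {N : ℕ} {β a b : ℝ}

theorem integral_jacobiEnsemble (N : ℕ) (β a b : ℝ) (f : (Fin N → ℝ) → ℝ) :
    ∫ x, f x ∂jacobiEnsemble N β a b = ∫ x, f x * jacobiDensity N β a b x ∂cubeMeasure N := by
  rw [jacobiEnsemble, integral_withDensity_eq_integral_toReal_smul (by fun_prop) (by simp)]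
  refine integral_congr_ae ?_
  filter_upwards [ae_jacobiDensity_pos N β a b] with x hx
  rw [ENNReal.toReal_ofReal hx.le, smul_eq_mul, mul_comm]

theorem integrable_jacobiEnsemble_iff {f : (Fin N → ℝ) → ℝ} :
    Integrable f (jacobiEnsemble N β a b) ↔
      Integrable (fun x => f x * jacobiDensity N β a b x) (cubeMeasure N) := by
  rw [jacobiEnsemble, integrable_withDensity_iff_integrable_smul' (by fun_prop) (by simp)]
  refine integrable_congr ?_
  filter_upwards [ae_jacobiDensity_pos N β a b] with x hx
  rw [ENNReal.toReal_ofReal hx.le, smul_eq_mul, mul_comm]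

theorem isFiniteMeasure_jacobiEnsemble (N : ℕ) (hβ : 0 ≤ β) (ha : -1 < a) (hb : -1 < b) :
    IsFiniteMeasure (jacobiEnsemble N β a b) :=
  isFiniteMeasure_withDensity_ofReal (integrable_jacobiDensity N hβ ha hb).2

theorem jacobiEnsemble_ne_zero (N : ℕ) (β a b : ℝ) : jacobiEnsemble N β a b ≠ 0 := by
  rw [jacobiEnsemble, ne_eq, withDensity_eq_zero_iff (by fun_prop)]
  intro h
  obtain ⟨x, hpos, hzero⟩ := ((ae_jacobiDensity_pos N β a b).and h).exists
  exact (ENNReal.ofReal_pos.mpr hpos).ne' hzero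

theorem measurePreserving_comp_perm_jacobiEnsemble (β a b : ℝ) (σ : Equiv.Perm (Fin N)) :
    MeasurePreserving (fun x : Fin N → ℝ => x ∘ σ) (jacobiEnsemble N β a b)
      (jacobiEnsemble N β a b) := by
  have hσ : MeasurePreserving (fun x : Fin N → ℝ => x ∘ σ) (cubeMeasure N) (cubeMeasure N) :=
    measurePreserving_comp_perm _ σ
  refine ⟨hσ.measurable, Measure.ext fun s hs => ?_⟩
  rw [Measure.map_apply hσ.measurable hs, jacobiEnsemble,
    withDensity_apply _ (hσ.measurable hs), withDensity_apply _ hs,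
    ← hσ.setLIntegral_comp_preimage hs (by fun_prop)]
  simp only [jacobiDensity_comp_perm]

theorem ae_jacobiEnsemble_of_ae_cubeMeasure {p : (Fin N → ℝ) → Prop}
    (h : ∀ᵐ x ∂cubeMeasure N, p x) : ∀ᵐ x ∂jacobiEnsemble N β a b, p x :=
  (withDensity_absolutelyContinuous _ _).ae_le h

theorem integrable_prod_mul_jacobiEnsemble (T : Finset (Fin N)) {f : (Fin N → ℝ) → ℝ}
    (hf : Integrable f (jacobiEnsemble N β a b)) :
    Integrable (fun x => (∏ k ∈ T, x k) * f x) (jacobiEnsemble N β a b) := by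
  refine hf.bdd_mul (c := 1) (Measurable.aestronglyMeasurable (by fun_prop)) ?_
  filter_upwards [ae_jacobiEnsemble_of_ae_cubeMeasure (ae_cubeMeasure_mem_Ioo N)] with x hx
  rw [Real.norm_of_nonneg (Finset.prod_nonneg fun k _ => (hx k).1.le)]
  exact Finset.prod_le_one (fun k _ => (hx k).1.le) fun k _ => (hx k).2.le

theorem integrable_prod_jacobiEnsemble (hβ : 0 ≤ β) (ha : -1 < a) (hb : -1 < b)
    (T : Finset (Fin N)) :
    Integrable (fun x => ∏ k ∈ T, x k) (jacobiEnsemble N β a b) := by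
  have := isFiniteMeasure_jacobiEnsemble N hβ ha hb
  simpa using integrable_prod_mul_jacobiEnsemble T (integrable_const (1 : ℝ))

end JacobiEnsemble

/-- The term that the factor `|x_i - x_j|^β` contributes, up to `β`, when Aomoto's total derivative
`∂_i (x_i (1 - x_i) ⋯)` is expanded. On the diagonal `x_i = x_j` it takes the junk value `0`. -/
noncomputable def aomotoKernel {N : ℕ} (i j : Fin N) (x : Fin N → ℝ) : ℝ :=
  x i * (1 - x i) / (x i - x j)

section AomotoKernel

variable {N : ℕ} {β a b : ℝ}

@[fun_prop]
theorem measurable_aomotoKernel (i j : Fin N) : Measurable (aomotoKernel i j) := by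
  unfold aomotoKernel; fun_prop

theorem norm_aomotoKernel_mul_jacobiDensity_le (hβ : 0 ≤ β) (ha : -1 ≤ a) (hb : -1 ≤ b)
    {i j : Fin N} (hij : i ≠ j) {x : Fin N → ℝ} (hx : ∀ k, x k ∈ Set.Ioo 0 1) (hne : x i ≠ x j) :
    ‖aomotoKernel i j x * jacobiDensity N β a b x‖ ≤
      (∏ k ∈ Finset.univ.erase i, jacobiWeight a b (x k)) * |x i - x j| ^ (β - 1) := by
  have hpos : 0 < |x i - x j| := abs_pos.mpr (sub_ne_zero.mpr hne)
  have hweight : 0 ≤ jacobiWeight (a + 1) (b + 1) (x i) := (jacobiWeight_pos _ _ (hx i)).le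
  have hweight' : jacobiWeight (a + 1) (b + 1) (x i) ≤ 1 :=
    jacobiWeight_le_one (by linarith) (by linarith) (hx i)
  have hprod : 0 ≤ ∏ k ∈ Finset.univ.erase i, jacobiWeight a b (x k) :=
    Finset.prod_nonneg fun k _ => (jacobiWeight_pos a b (hx k)).le
  have hinter := interaction_nonneg β x
  calc ‖aomotoKernel i j x * jacobiDensity N β a b x‖
      = ‖jacobiWeight (a + 1) (b + 1) (x i) *
          ((∏ k ∈ Finset.univ.erase i, jacobiWeight a b (x k)) *
            (interaction N β x / (x i - x j)))‖ := by
        rw [aomotoKernel, jacobiDensity, ← Finset.mul_prod_erase _ _ (Finset.mem_univ i),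
          jacobiWeight_add_one a b (hx i)]
        ring_nf
    _ = jacobiWeight (a + 1) (b + 1) (x i) *
          ((∏ k ∈ Finset.univ.erase i, jacobiWeight a b (x k)) *
            (interaction N β x / |x i - x j|)) := by
        rw [norm_mul, norm_mul, norm_div, Real.norm_of_nonneg hweight, Real.norm_of_nonneg hprod,
          Real.norm_of_nonneg hinter, Real.norm_eq_abs]
    _ ≤ 1 * ((∏ k ∈ Finset.univ.erase i, jacobiWeight a b (x k)) *
          (|x i - x j| ^ β / |x i - x j|)) := by
        gcongr
        exact interaction_le_abs_sub_rpow hβ (fun k => Set.Ioo_subset_Icc_self (hx k)) hij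
    _ = _ := by rw [one_mul, Real.rpow_sub_one hpos.ne']

theorem integrable_aomotoKernel (hβ : 0 < β) (ha : -1 < a) (hb : -1 < b) {i j : Fin N}
    (hij : i ≠ j) : Integrable (aomotoKernel i j) (jacobiEnsemble N β a b) := by
  refine integrable_jacobiEnsemble_iff.mpr ((integrable_prod_jacobiWeight_mul_abs_sub_rpow hij
    ha hb (show -1 < β - 1 by linarith)).mono' (Measurable.aestronglyMeasurable (by fun_prop)) ?_)
  filter_upwards [ae_cubeMeasure_mem_Ioo N, ae_cubeMeasure_injective N] with x hx hinj
  exact norm_aomotoKernel_mul_jacobiDensity_le hβ.le ha.le hb.le hij hx (hinj.ne hij)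

theorem integrable_prod_mul_aomotoKernel (hβ : 0 < β) (ha : -1 < a) (hb : -1 < b)
    (T : Finset (Fin N)) {i j : Fin N} (hij : i ≠ j) :
    Integrable (fun x => (∏ k ∈ T, x k) * aomotoKernel i j x) (jacobiEnsemble N β a b) :=
  integrable_prod_mul_jacobiEnsemble T (integrable_aomotoKernel hβ ha hb hij)

end AomotoKernel

theorem prod_swap_apply_of_notMem {ι M : Type*} [DecidableEq ι] [CommMonoid M] {s : Finset ι}
    {i j : ι} (hi : i ∉ s) (hj : j ∉ s) (x : ι → M) :
    ∏ k ∈ s, x (Equiv.swap i j k) = ∏ k ∈ s, x k :=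
  Finset.prod_congr rfl fun k hk => by
    rw [Equiv.swap_apply_of_ne_of_ne (ne_of_mem_of_not_mem hk hi) (ne_of_mem_of_not_mem hk hj)]

/-- The unnormalised Jacobi `β`-ensemble average of the monomial `∏ i ∈ T, x i`; in particular
`jacobiMoment N β a b ∅` is the normalisation constant. -/
noncomputable def jacobiMoment (N : ℕ) (β a b : ℝ) (T : Finset (Fin N)) : ℝ :=
  ∫ x, ∏ i ∈ T, x i ∂jacobiEnsemble N β a b

section JacobiMoment

variable {N : ℕ} {β a b : ℝ} {T : Finset (Fin N)} {i j : Fin N}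

theorem jacobiMoment_empty (N : ℕ) (β a b : ℝ) :
    jacobiMoment N β a b ∅ = (jacobiEnsemble N β a b).real Set.univ := by
  simp [jacobiMoment]

theorem jacobiMoment_empty_ne_zero (N : ℕ) (hβ : 0 ≤ β) (ha : -1 < a) (hb : -1 < b) :
    jacobiMoment N β a b ∅ ≠ 0 := by
  have := isFiniteMeasure_jacobiEnsemble N hβ ha hb
  rw [jacobiMoment_empty, measureReal_ne_zero_iff, Measure.measure_univ_ne_zero]
  exact jacobiEnsemble_ne_zero N β a b

theorem integral_comp_perm_jacobiEnsemble (σ : Equiv.Perm (Fin N)) {f : (Fin N → ℝ) → ℝ}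
    (hf : AEStronglyMeasurable f (jacobiEnsemble N β a b)) :
    ∫ x, f (x ∘ σ) ∂jacobiEnsemble N β a b = ∫ x, f x ∂jacobiEnsemble N β a b := by
  have hσ := measurePreserving_comp_perm_jacobiEnsemble β a b σ
  rw [← integral_map hσ.aemeasurable (by rwa [hσ.map_eq]), hσ.map_eq]

theorem two_mul_integral_jacobiEnsemble (σ : Equiv.Perm (Fin N)) {f : (Fin N → ℝ) → ℝ}
    (hf : Integrable f (jacobiEnsemble N β a b)) :
    2 * ∫ x, f x ∂jacobiEnsemble N β a b =
      ∫ x, (f x + f (x ∘ σ)) ∂jacobiEnsemble N β a b := by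
  have hfσ : Integrable (fun x => f (x ∘ σ)) (jacobiEnsemble N β a b) :=
    (measurePreserving_comp_perm_jacobiEnsemble β a b σ).integrable_comp_of_integrable hf
  rw [integral_add hf hfσ, integral_comp_perm_jacobiEnsemble σ hf.1, two_mul]

theorem jacobiMoment_insert_eq_insert (hi : i ∉ T) (hj : j ∉ T) :
    jacobiMoment N β a b (insert j T) = jacobiMoment N β a b (insert i T) := by
  rw [jacobiMoment, jacobiMoment, ← integral_comp_perm_jacobiEnsemble (Equiv.swap i j)
    (Measurable.aestronglyMeasurable (by fun_prop))]
  simp only [Function.comp_apply, Finset.prod_insert hi, Finset.prod_insert hj,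
    prod_swap_apply_of_notMem hi hj, Equiv.swap_apply_right]

theorem aomotoKernel_comp_swap (i j : Fin N) (x : Fin N → ℝ) :
    aomotoKernel i j (x ∘ Equiv.swap i j) = aomotoKernel j i x := by
  simp [aomotoKernel]

theorem aomotoKernel_add_swap {x : Fin N → ℝ} (h : x i ≠ x j) :
    aomotoKernel i j x + aomotoKernel j i x = 1 - x i - x j := by
  have hsub : x i - x j ≠ 0 := sub_ne_zero.mpr h
  rw [aomotoKernel, aomotoKernel, ← neg_sub (x i) (x j)]
  field_simp
  ring

theorem mul_aomotoKernel_add_swap {x : Fin N → ℝ} (h : x i ≠ x j) :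
    x j * aomotoKernel i j x + x i * aomotoKernel j i x = -(x i * x j) := by
  have hsub : x i - x j ≠ 0 := sub_ne_zero.mpr h
  rw [aomotoKernel, aomotoKernel, ← neg_sub (x i) (x j)]
  field_simp
  ring

theorem two_mul_integral_prod_mul_aomotoKernel (hβ : 0 < β) (ha : -1 < a) (hb : -1 < b)
    (hij : i ≠ j) (hi : i ∉ T) (hj : j ∉ T) :
    2 * ∫ x, (∏ k ∈ T, x k) * aomotoKernel i j x ∂jacobiEnsemble N β a b =
      jacobiMoment N β a b T - 2 * jacobiMoment N β a b (insert i T) := by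
  have hint := integrable_prod_jacobiEnsemble (N := N) hβ.le ha hb
  have hsymm : ∀ᵐ x ∂jacobiEnsemble N β a b,
      (∏ k ∈ T, x k) * aomotoKernel i j x + (∏ k ∈ T, x (Equiv.swap i j k)) *
        aomotoKernel i j (x ∘ Equiv.swap i j) =
      ∏ k ∈ T, x k - ∏ k ∈ insert i T, x k - ∏ k ∈ insert j T, x k := by
    filter_upwards [ae_jacobiEnsemble_of_ae_cubeMeasure (ae_cubeMeasure_injective N)] with x hx
    rw [prod_swap_apply_of_notMem hi hj, aomotoKernel_comp_swap, Finset.prod_insert hi,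
      Finset.prod_insert hj, ← mul_add, aomotoKernel_add_swap (hx.ne hij)]
    ring
  have hsub : Integrable (fun x => ∏ k ∈ T, x k - ∏ k ∈ insert i T, x k)
      (jacobiEnsemble N β a b) := (hint T).sub (hint _)
  rw [two_mul_integral_jacobiEnsemble (Equiv.swap i j)
      (integrable_prod_mul_aomotoKernel hβ ha hb T hij)]
  refine (integral_congr_ae hsymm).trans ?_
  rw [integral_sub hsub (hint _), integral_sub (hint T) (hint _)]
  change jacobiMoment N β a b T - jacobiMoment N β a b (insert i T) -
    jacobiMoment N β a b (insert j T) = _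
  rw [jacobiMoment_insert_eq_insert hi hj]
  ring

theorem two_mul_integral_prod_insert_mul_aomotoKernel (hβ : 0 < β) (ha : -1 < a) (hb : -1 < b)
    (hij : i ≠ j) (hi : i ∉ T) (hj : j ∉ T) :
    2 * ∫ x, (∏ k ∈ insert j T, x k) * aomotoKernel i j x ∂jacobiEnsemble N β a b =
      -jacobiMoment N β a b (insert i (insert j T)) := by
  have hsymm : ∀ᵐ x ∂jacobiEnsemble N β a b,
      (∏ k ∈ insert j T, x k) * aomotoKernel i j x + (∏ k ∈ insert j T, x (Equiv.swap i j k)) *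
        aomotoKernel i j (x ∘ Equiv.swap i j) = -∏ k ∈ insert i (insert j T), x k := by
    filter_upwards [ae_jacobiEnsemble_of_ae_cubeMeasure (ae_cubeMeasure_injective N)] with x hx
    have hkernel := mul_aomotoKernel_add_swap (hx.ne hij)
    have hi' : i ∉ insert j T := by simp [hij, hi]
    rw [Finset.prod_insert hi', Finset.prod_insert hj, Finset.prod_insert hj,
      prod_swap_apply_of_notMem hi hj, aomotoKernel_comp_swap, Equiv.swap_apply_right]
    linear_combination (∏ k ∈ T, x k) * hkernel
  rw [two_mul_integral_jacobiEnsemble (Equiv.swap i j)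
      (integrable_prod_mul_aomotoKernel hβ ha hb _ hij)]
  exact (integral_congr_ae hsymm).trans (integral_neg _)

theorem two_mul_sum_integral_prod_mul_aomotoKernel (hβ : 0 < β) (ha : -1 < a) (hb : -1 < b)
    (hi : i ∉ T) :
    2 * ∑ j ∈ Finset.univ.erase i,
        ∫ x, (∏ k ∈ T, x k) * aomotoKernel i j x ∂jacobiEnsemble N β a b =
      (N - 1 - T.card) * (jacobiMoment N β a b T - 2 * jacobiMoment N β a b (insert i T)) -
        T.card * jacobiMoment N β a b (insert i T) := by
  have hsub : T ⊆ Finset.univ.erase i :=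
    fun j hj => Finset.mem_erase.mpr ⟨ne_of_mem_of_not_mem hj hi, Finset.mem_univ j⟩
  have hcard : ((Finset.univ.erase i \ T).card : ℝ) = N - 1 - T.card := by
    rw [Finset.cast_card_sdiff hsub, Finset.cast_card_erase_of_mem (Finset.mem_univ i),
      Finset.card_univ, Fintype.card_fin]
  have hmem : ∀ j ∈ T, 2 * ∫ x, (∏ k ∈ T, x k) * aomotoKernel i j x ∂jacobiEnsemble N β a b =
      -jacobiMoment N β a b (insert i T) := fun j hj => by
    have hij : i ≠ j := (ne_of_mem_of_not_mem hj hi).symm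
    simpa only [Finset.insert_erase hj] using
      two_mul_integral_prod_insert_mul_aomotoKernel hβ ha hb hij
        (fun h => hi (Finset.mem_of_mem_erase h)) (Finset.notMem_erase j T)
  have hnotMem : ∀ j ∈ Finset.univ.erase i \ T,
      2 * ∫ x, (∏ k ∈ T, x k) * aomotoKernel i j x ∂jacobiEnsemble N β a b =
        jacobiMoment N β a b T - 2 * jacobiMoment N β a b (insert i T) := fun j hj => by
    obtain ⟨hji, hjT⟩ := Finset.mem_sdiff.mp hj
    exact two_mul_integral_prod_mul_aomotoKernel hβ ha hb (Finset.ne_of_mem_erase hji).symm hi hjT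
  rw [Finset.mul_sum, ← Finset.sum_sdiff hsub, Finset.sum_congr rfl hnotMem,
    Finset.sum_congr rfl hmem, Finset.sum_const, Finset.sum_const, nsmul_eq_mul, nsmul_eq_mul,
    hcard]
  ring

theorem integrable_aomoto (hβ : 0 < β) (ha : -1 < a) (hb : -1 < b) (T : Finset (Fin N))
    (i : Fin N) :
    Integrable (fun x => (∏ k ∈ T, x k) * (a + 1 - (a + b + 2) * x i +
      β * ∑ j ∈ Finset.univ.erase i, aomotoKernel i j x)) (jacobiEnsemble N β a b) := by
  have := isFiniteMeasure_jacobiEnsemble N hβ.le ha hb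
  have hcoord : Integrable (fun x => x i) (jacobiEnsemble N β a b) := by
    simpa using integrable_prod_jacobiEnsemble hβ.le ha hb {i}
  refine integrable_prod_mul_jacobiEnsemble T
    (((integrable_const (a + 1)).sub (hcoord.const_mul (a + b + 2))).add
      (.const_mul (integrable_finsetSum _ fun j hj => ?_) β))
  exact integrable_aomotoKernel hβ ha hb (Finset.ne_of_mem_erase hj).symm

theorem integral_aomoto_jacobiEnsemble_eq_zero (hβ : 0 < β) (ha : -1 < a) (hb : -1 < b)
    (hi : i ∉ T) :
    ∫ x, (∏ k ∈ T, x k) * (a + 1 - (a + b + 2) * x i +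
      β * ∑ j ∈ Finset.univ.erase i, aomotoKernel i j x) ∂jacobiEnsemble N β a b = 0 := by
  rw [integral_jacobiEnsemble]
  refine integral_pi_eq_zero_of_integral_update_eq_zero i
    (integrable_jacobiEnsemble_iff.mp (integrable_aomoto hβ ha hb T i)) fun x hx => ?_
  obtain ⟨C, hC⟩ := exists_jacobiDensity_update_eq β a b x i
  have hkernel : ∀ t, ∑ j ∈ Finset.univ.erase i, aomotoKernel i j (Function.update x i t) =
      ∑ j ∈ Finset.univ.erase i, t * (1 - t) / (t - x j) := fun t =>
    Finset.sum_congr rfl fun j hj => by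
      rw [aomotoKernel, Function.update_self, Function.update_of_ne (Finset.ne_of_mem_erase hj)]
  have hfactor : ∀ t, (∏ k ∈ T, Function.update x i t k) *
      (a + 1 - (a + b + 2) * Function.update x i t i +
        β * ∑ j ∈ Finset.univ.erase i, aomotoKernel i j (Function.update x i t)) *
        jacobiDensity N β a b (Function.update x i t) =
      (∏ k ∈ T, x k) * C * ((a + 1 - (a + b + 2) * t +
        β * ∑ j ∈ Finset.univ.erase i, t * (1 - t) / (t - x j)) *
        (jacobiWeight a b t * ∏ j ∈ Finset.univ.erase i, |t - x j| ^ β)) := fun t => by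
    rw [hC, hkernel, Finset.prod_update_of_notMem hi, Function.update_self]
    ring
  simp only [hfactor] at hx ⊢
  rcases eq_or_ne ((∏ k ∈ T, x k) * C) 0 with hzero | hne
  · simp [hzero]
  · rw [integral_const_mul, integral_aomoto_eq_zero _ x hβ.le ha hb
      ((integrable_const_mul_iff hne.isUnit _).mp hx), mul_zero]

theorem jacobiMoment_insert_mul (hβ : 0 < β) (ha : -1 < a) (hb : -1 < b) (hi : i ∉ T) :
    jacobiMoment N β a b (insert i T) * (a + b + 2 + (2 * N - (T.card + 1) - 1) * β / 2) =
      jacobiMoment N β a b T * (a + 1 + (N - (T.card + 1)) * β / 2) := by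
  have hint := integrable_prod_jacobiEnsemble (N := N) hβ.le ha hb
  have hsub : Integrable (fun x => (a + 1) * ∏ k ∈ T, x k - (a + b + 2) * ∏ k ∈ insert i T, x k)
      (jacobiEnsemble N β a b) := ((hint T).const_mul _).sub ((hint _).const_mul _)
  have hkernel := fun j (hj : j ∈ Finset.univ.erase i) =>
    integrable_prod_mul_aomotoKernel hβ ha hb T (Finset.ne_of_mem_erase hj).symm
  have hexpand : ∫ x, (∏ k ∈ T, x k) * (a + 1 - (a + b + 2) * x i +
        β * ∑ j ∈ Finset.univ.erase i, aomotoKernel i j x) ∂jacobiEnsemble N β a b =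
      (a + 1) * jacobiMoment N β a b T - (a + b + 2) * jacobiMoment N β a b (insert i T) +
        β * ∑ j ∈ Finset.univ.erase i,
          ∫ x, (∏ k ∈ T, x k) * aomotoKernel i j x ∂jacobiEnsemble N β a b := by
    simp only [jacobiMoment]
    rw [← integral_finsetSum _ hkernel, ← integral_const_mul, ← integral_const_mul,
      ← integral_const_mul, ← integral_sub ((hint T).const_mul _) ((hint _).const_mul _),
      ← integral_add hsub ((integrable_finsetSum _ hkernel).const_mul β)]
    refine integral_congr_ae (.of_forall fun x => ?_)
    simp only [Finset.prod_insert hi, ← Finset.mul_sum]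
    ring
  linear_combination hexpand - integral_aomoto_jacobiEnsemble_eq_zero hβ ha hb hi +
    β / 2 * two_mul_sum_integral_prod_mul_aomotoKernel hβ ha hb hi

theorem jacobiMoment_eq_prod (hβ : 0 < β) (ha : -1 < a) (hb : -1 < b) (T : Finset (Fin N)) :
    jacobiMoment N β a b T = jacobiMoment N β a b ∅ *
      ∏ j ∈ Finset.range T.card, (a + 1 + ((N : ℝ) - (j + 1)) * β / 2) /
        (a + b + 2 + (2 * (N : ℝ) - (j + 1) - 1) * β / 2) := by
  induction T using Finset.induction_on with
  | empty => simp
  | insert i T hi ih =>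
    have hcard : (T.card : ℝ) + 1 ≤ N := by
      have := (insert i T).card_le_univ
      rw [Finset.card_insert_of_notMem hi, Fintype.card_fin] at this
      exact_mod_cast this
    have hden : 0 < a + b + 2 + (2 * (N : ℝ) - (T.card + 1) - 1) * β / 2 := by
      have hcoef : 0 ≤ 2 * (N : ℝ) - (T.card + 1) - 1 := by
        linarith [T.card.cast_nonneg (α := ℝ)]
      have := mul_nonneg hcoef hβ.le
      linarith
    rw [Finset.card_insert_of_notMem hi, Finset.prod_range_succ, ← mul_assoc, ← ih,
      ← mul_div_assoc, eq_div_iff hden.ne', jacobiMoment_insert_mul hβ ha hb hi]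

theorem integral_esym_jacobiEnsemble (hβ : 0 < β) (ha : -1 < a) (hb : -1 < b) (l : ℕ) :
    ∫ x, esym N l x ∂jacobiEnsemble N β a b = N.choose l *
      (∏ j ∈ Finset.range l, (a + 1 + ((N : ℝ) - (j + 1)) * β / 2) /
        (a + b + 2 + (2 * (N : ℝ) - (j + 1) - 1) * β / 2)) * jacobiMoment N β a b ∅ := by
  have hmoment : ∀ T ∈ Finset.powersetCard l (Finset.univ : Finset (Fin N)),
      ∫ x, ∏ i ∈ T, x i ∂jacobiEnsemble N β a b = jacobiMoment N β a b ∅ *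
        ∏ j ∈ Finset.range l, (a + 1 + ((N : ℝ) - (j + 1)) * β / 2) /
          (a + b + 2 + (2 * (N : ℝ) - (j + 1) - 1) * β / 2) := fun T hT => by
    rw [← (Finset.mem_powersetCard.mp hT).2]
    exact jacobiMoment_eq_prod hβ ha hb T
  unfold esym
  rw [integral_finsetSum _ fun T _ => integrable_prod_jacobiEnsemble hβ.le ha hb T,
    Finset.sum_congr rfl hmoment, Finset.sum_const, Finset.card_powersetCard, Finset.card_univ,
    Fintype.card_fin, nsmul_eq_mul]
  ring

end JacobiMoment

/-- The Jacobi `β`-ensemble average of the `l`-th elementary symmetric polynomial: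
`⟨e_l⟩ = C(N,l) ∏_{j=1}^{l} (a + 1 + (N-j)β/2)/(a + b + 2 + (2N-j-1)β/2)`. -/
theorem jacobi_beta_ensemble_average_esym (β : ℝ) (hβ : 0 < β) (N : ℕ) (hN : 0 < N)
    (a b : ℝ) (ha : -1 < a) (hb : -1 < b) (l : ℕ) (hl : l ≤ N) :
    (∫ x in Set.univ.pi (fun _ : Fin N => Set.Icc (0 : ℝ) 1),
        esym N l x * ((∏ i, x i ^ a * (1 - x i) ^ b) * interaction N β x)) /
      (∫ x in Set.univ.pi (fun _ : Fin N => Set.Icc (0 : ℝ) 1),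
        (∏ i, x i ^ a * (1 - x i) ^ b) * interaction N β x)
      = (N.choose l : ℝ) *
          ∏ j ∈ Finset.range l,
            (a + 1 + ((N : ℝ) - (j + 1)) * β / 2) /
              (a + b + 2 + (2 * (N : ℝ) - (j + 1) - 1) * β / 2) := by
  have hnum : ∫ x, esym N l x * jacobiDensity N β a b x ∂cubeMeasure N =
      ∫ x, esym N l x ∂jacobiEnsemble N β a b := (integral_jacobiEnsemble N β a b _).symm
  have hden : ∫ x, jacobiDensity N β a b x ∂cubeMeasure N = jacobiMoment N β a b ∅ := by
    rw [jacobiMoment, integral_jacobiEnsemble]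
    simp
  unfold jacobiDensity jacobiWeight at hnum hden
  rw [restrict_volume_cube, hnum, hden, integral_esym_jacobiEnsemble hβ ha hb,
    mul_div_cancel_right₀ _ (jacobiMoment_empty_ne_zero N hβ.le ha hb)]
end

section
/- Let β > 0, let N be a positive integer, let a > −1 be real, and let 0 ≤ l ≤ N. Then the Laguerre β-ensemble average of the l-th elementary symmetric polynomial is ⟨e_l⟩ = C(N,l) · ∏_{j=1}^{l} (a + 1 + (N−j)β/2), where C(N,l) is the binomial coefficient. Explicitly: ∫_{(0,∞)^N} e_l(x) ∏_{i=1}^N x_i^a e^{−x_i} ∏_{1≤j<k≤N} |x_k−x_j|^β dx divided by ∫_{(0,∞)^N} ∏_{i=1}^N x_i^a e^{−x_i} ∏_{1≤j<k≤N} |x_k−x_j|^β dx equals C(N,l) ∏_{j=1}^{l} (a+1+(N−j)β/2). -/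
/-!
Up to a constant the weight `∏ x_i^a e^{-x_i}` is the joint density of independent gamma
variables of shape `a + 1`. Write `e_A = ∏_{j ∈ A} x_j`, let `Δ` be the interaction term and let
`i ∉ A`. Stein's identity for the gamma law in the coordinate `x_i`, applied to `e_A Δ`, gives
`⟨e_{A ∪ i}⟩ = (a + 1) ⟨e_A⟩ + β ∑_{k ≠ i} ⟨e_{A ∪ i} / (x_i - x_k)⟩`.
Averaging over the exchange of `x_i` and `x_k` kills the `k`-th term when `k ∈ A` and turns
`x_i / (x_i - x_k)` into `1 / 2` otherwise, whence Aomoto's recursion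
`⟨e_{A ∪ i}⟩ = (a + 1 + (N - |A| - 1) β / 2) ⟨e_A⟩`.
For small `β` the function `Δ` is not differentiable on the diagonals, so `|d|` is replaced by
`√(d ^ 2 + ε)` throughout the interaction and `ε` tends to `0` only after the symmetrization.
-/

open MeasureTheory

section ProductMeasures

open Set Function

variable {ι : Type*} [Fintype ι] {X : ι → Type*} [∀ i, MeasurableSpace (X i)]

lemma measurePreserving_update_pi [DecidableEq ι] (μ : ∀ i, Measure (X i))
    [∀ i, IsProbabilityMeasure (μ i)] (i : ι) :
    MeasurePreserving (fun p : (∀ j, X j) × X i => update p.1 i p.2)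
      ((Measure.pi μ).prod (μ i)) (Measure.pi μ) := by
  have hmeas : Measurable fun p : (∀ j, X j) × X i => update p.1 i p.2 :=
    measurable_update'
  refine ⟨hmeas, (Measure.pi_eq fun s hs => ?_).symm⟩
  have hpre : (fun p : (∀ j, X j) × X i => update p.1 i p.2) ⁻¹' univ.pi s =
      univ.pi (update s i univ) ×ˢ s i := by
    ext ⟨x, t⟩
    simp only [mem_preimage, mem_univ_pi, mem_prod]
    rw [forall_update_iff x fun j y => y ∈ s j, forall_update_iff s fun j u => x j ∈ u]
    simp [and_comm]
  have hprod : ∏ j ∈ Finset.univ.erase i, μ j (update s i univ j) =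
      ∏ j ∈ Finset.univ.erase i, μ j (s j) :=
    Finset.prod_congr rfl fun j hj => by rw [update_of_ne (Finset.ne_of_mem_erase hj)]
  rw [Measure.map_apply hmeas (.univ_pi hs), hpre, Measure.prod_prod, Measure.pi_pi,
    ← Finset.mul_prod_erase _ _ (Finset.mem_univ i), hprod, update_self, measure_univ, one_mul,
    Finset.prod_erase_mul _ _ (Finset.mem_univ i)]

lemma integral_pi_eq_zero_of_ae_integral_update_eq_zero [DecidableEq ι] {μ : ∀ i, Measure (X i)}
    [∀ i, IsProbabilityMeasure (μ i)] {E : Type*} [NormedAddCommGroup E] [NormedSpace ℝ E]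
    {f : (∀ j, X j) → E} (hf : Integrable f (Measure.pi μ)) (i : ι)
    (h : ∀ᵐ x ∂Measure.pi μ, ∫ t, f (update x i t) ∂μ i = 0) :
    ∫ x, f x ∂Measure.pi μ = 0 := by
  have hmp := measurePreserving_update_pi μ i
  rw [← hmp.map_eq] at hf ⊢
  rw [integral_map hmp.aemeasurable hf.aestronglyMeasurable]
  exact (integral_prod _ (hf.comp_measurable hmp.measurable)).trans (integral_eq_zero_of_ae h)

lemma measurePreserving_comp_perm_pi {Y : Type*} [MeasurableSpace Y] (μ : Measure Y)
    [SigmaFinite μ] (σ : Equiv.Perm ι) :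
    MeasurePreserving (fun x : ι → Y => x ∘ σ) (Measure.pi fun _ => μ) (Measure.pi fun _ => μ) :=
  measurePreserving_arrowCongr' (fun _ => μ) (fun _ => μ) σ.symm (.refl Y) fun _ => .id μ

lemma integral_pi_eq_half_integral_add_comp_perm {Y : Type*} [MeasurableSpace Y] {μ : Measure Y}
    [SigmaFinite μ] (σ : Equiv.Perm ι) {f : (ι → Y) → ℝ}
    (hf : Integrable f (Measure.pi fun _ => μ)) :
    ∫ x, f x ∂Measure.pi (fun _ => μ) =
      (∫ x, (f x + f (x ∘ σ)) ∂Measure.pi fun _ => μ) / 2 := by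
  have hσ := measurePreserving_comp_perm_pi μ σ
  have hinv : ∫ x, f (x ∘ σ) ∂Measure.pi (fun _ => μ) = ∫ x, f x ∂Measure.pi fun _ => μ := by
    have hfm := hf.aestronglyMeasurable
    rw [← hσ.map_eq] at hfm
    rw [← integral_map hσ.aemeasurable hfm, hσ.map_eq]
  have hadd := integral_add hf (hσ.integrable_comp_of_integrable hf)
  simp only [comp_apply, hinv] at hadd
  rw [hadd]
  ring

lemma pi_withDensity_ofReal {μ : ∀ i, Measure (X i)} [∀ i, SigmaFinite (μ i)]
    {f : ∀ i, X i → ℝ} (hf : ∀ i, Integrable (f i) (μ i)) (hf0 : ∀ i x, 0 ≤ f i x) :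
    Measure.pi (fun i => (μ i).withDensity fun x => ENNReal.ofReal (f i x)) =
      (Measure.pi μ).withDensity fun x => ENNReal.ofReal (∏ i, f i (x i)) := by
  have _ := fun i => isFiniteMeasure_withDensity_ofReal (hf i).2
  refine Measure.pi_eq fun s hs => ?_
  have happly : ∀ i, (μ i).withDensity (fun x => ENNReal.ofReal (f i x)) (s i) =
      ENNReal.ofReal (∫ x in s i, f i x ∂μ i) := fun i => by
    rw [withDensity_apply _ (hs i),
      ofReal_integral_eq_lintegral_ofReal (hf i).integrableOn (.of_forall (hf0 i))]
  rw [withDensity_apply _ (.univ_pi hs), Measure.restrict_pi_pi,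
    ← ofReal_integral_eq_lintegral_ofReal
      (Integrable.fintype_prod_dep fun i => (hf i).integrableOn)
      (.of_forall fun x => Finset.prod_nonneg fun i _ => hf0 i (x i)),
    integral_fintype_prod_eq_prod, ENNReal.ofReal_prod_of_nonneg fun i _ =>
      integral_nonneg (hf0 i)]
  exact Finset.prod_congr rfl fun i _ => (happly i).symm

end ProductMeasures

section GammaDistribution

open Set ProbabilityTheory
open scoped NNReal

variable {a r : ℝ}

lemma gammaMeasure_eq_withDensity_restrict_Ioi (a r : ℝ) :
    gammaMeasure a r = (volume.restrict (Ioi 0)).withDensity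
      fun x => ENNReal.ofReal (gammaPDFReal a r x) := by
  have hpdf : gammaPDF a r = (Ici 0).indicator fun x => ENNReal.ofReal (gammaPDFReal a r x) := by
    ext x
    rcases lt_or_ge x 0 with hx | hx
    · rw [gammaPDF_of_neg hx, indicator_of_notMem (notMem_Ici.2 hx)]
    · rw [indicator_of_mem (mem_Ici.2 hx), gammaPDF]
  rw [gammaMeasure, hpdf, withDensity_indicator measurableSet_Ici,
    ← restrict_Ioi_eq_restrict_Ici]

lemma integrable_gammaMeasure_iff (ha : 0 < a) (hr : 0 < r) {g : ℝ → ℝ} :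
    Integrable g (gammaMeasure a r) ↔
      IntegrableOn (fun x => gammaPDFReal a r x * g x) (Ioi 0) := by
  rw [gammaMeasure_eq_withDensity_restrict_Ioi,
    integrable_withDensity_iff_integrable_smul' (by fun_prop) (by simp)]
  simp only [ENNReal.toReal_ofReal (gammaPDFReal_nonneg ha hr _), smul_eq_mul, IntegrableOn]

lemma integral_gammaMeasure (ha : 0 < a) (hr : 0 < r) (g : ℝ → ℝ) :
    ∫ x, g x ∂gammaMeasure a r = ∫ x in Ioi 0, gammaPDFReal a r x * g x := by
  rw [gammaMeasure_eq_withDensity_restrict_Ioi,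
    integral_withDensity_eq_integral_toReal_smul (by fun_prop) (by simp)]
  simp only [ENNReal.toReal_ofReal (gammaPDFReal_nonneg ha hr _), smul_eq_mul]

lemma memLp_id_gammaMeasure (ha : 0 < a) (hr : 0 < r) (p : ℝ≥0) :
    MemLp id p (gammaMeasure a r) := by
  rcases eq_zero_or_pos p with rfl | hp
  · exact memLp_zero_iff_aestronglyMeasurable.2 (by fun_prop)
  rw [← integrable_norm_rpow_iff (by fun_prop) (by simpa using hp.ne') ENNReal.coe_ne_top,
    ENNReal.coe_toReal, integrable_gammaMeasure_iff ha hr]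
  have hexp : -1 < a - 1 + p := by linarith [NNReal.coe_pos.2 hp]
  have h := (integrableOn_rpow_mul_exp_neg_mul_rpow hexp one_pos hr).const_mul
    (r ^ a / Real.Gamma a)
  refine IntegrableOn.congr_fun h (fun x (hx : 0 < x) => ?_) measurableSet_Ioi
  simp only [gammaPDFReal, if_pos hx.le, id, Real.norm_of_nonneg hx.le, Real.rpow_one,
    Real.rpow_add hx, neg_mul]
  ring

lemma mul_gammaPDFReal_of_nonneg (ha : a ≠ 0) (r : ℝ) {x : ℝ} (hx : 0 ≤ x) :
    x * gammaPDFReal a r x = r ^ a / Real.Gamma a * x ^ a * Real.exp (-(r * x)) := by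
  rw [gammaPDFReal, if_pos hx]
  rcases hx.eq_or_lt with rfl | hx
  · simp [Real.zero_rpow ha]
  · rw [Real.rpow_sub_one hx.ne']
    field_simp

lemma hasDerivAt_mul_gammaPDFReal (ha : a ≠ 0) (r : ℝ) {x : ℝ} (hx : 0 < x) :
    HasDerivAt (fun t => t * gammaPDFReal a r t) ((a - r * x) * gammaPDFReal a r x) x := by
  have hexp : HasDerivAt (fun t => Real.exp (-(r * t))) (Real.exp (-(r * x)) * -r) x := by
    simpa using ((hasDerivAt_id x).const_mul r).neg.exp
  have h := ((Real.hasDerivAt_rpow_const (p := a) (Or.inl hx.ne')).const_mul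
    (r ^ a / Real.Gamma a)).mul hexp
  refine (h.congr_of_eventuallyEq ?_).congr_deriv ?_
  · filter_upwards [lt_mem_nhds hx] with t ht using mul_gammaPDFReal_of_nonneg ha r ht.le
  · rw [sub_mul, mul_assoc r, mul_gammaPDFReal_of_nonneg ha r hx.le, gammaPDFReal, if_pos hx.le]
    ring

theorem integral_gammaMeasure_stein (ha : 0 < a) (hr : 0 < r) {g g' : ℝ → ℝ}
    (hg0 : ContinuousWithinAt g (Ici 0) 0) (hg : ∀ x, 0 < x → HasDerivAt g (g' x) x)
    (hint : Integrable (fun x => x * g x) (gammaMeasure a r))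
    (hint' : Integrable (fun x => x * g' x + (a - r * x) * g x) (gammaMeasure a r)) :
    ∫ x, (x * g' x + (a - r * x) * g x) ∂gammaMeasure a r = 0 := by
  set F : ℝ → ℝ := fun x => x * gammaPDFReal a r x * g x
  have hderiv : ∀ x ∈ Ioi (0 : ℝ),
      HasDerivAt F (gammaPDFReal a r x * (x * g' x + (a - r * x) * g x)) x := fun x hx =>
    ((hasDerivAt_mul_gammaPDFReal ha.ne' r hx).mul (hg x hx)).congr_deriv (by ring)
  rw [integrable_gammaMeasure_iff ha hr] at hint hint'
  have hF : IntegrableOn F (Ioi 0) := by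
    refine hint.congr_fun (fun x _ => ?_) measurableSet_Ioi
    simp only [F]
    ring
  have hcont : ContinuousWithinAt (fun x => x * gammaPDFReal a r x) (Ici 0) 0 := by
    have h : Continuous fun x : ℝ => r ^ a / Real.Gamma a * x ^ a * Real.exp (-(r * x)) := by
      have := Real.continuous_rpow_const ha.le
      fun_prop
    exact h.continuousWithinAt.congr (fun x hx => mul_gammaPDFReal_of_nonneg ha.ne' r hx)
      (mul_gammaPDFReal_of_nonneg ha.ne' r le_rfl)
  rw [integral_gammaMeasure ha hr, integral_Ioi_of_hasDerivAt_of_tendsto (hcont.mul hg0) hderiv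
    hint' (tendsto_zero_of_hasDerivAt_of_integrableOn_Ioi hderiv hint' hF)]
  simp

end GammaDistribution

section GammaProduct

open Set Function ProbabilityTheory
open scoped NNReal

variable {ι : Type*} [Fintype ι] {a r : ℝ}

/-- The joint law of independent coordinates, indexed by `ι`, that all have the gamma
distribution of shape `a` and rate `r`. -/
noncomputable def gammaPi (ι : Type*) [Fintype ι] (a r : ℝ) : Measure (ι → ℝ) :=
  Measure.pi fun _ => gammaMeasure a r

lemma isProbabilityMeasure_gammaPi (ha : 0 < a) (hr : 0 < r) :
    IsProbabilityMeasure (gammaPi ι a r) :=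
  have := isProbabilityMeasure_gammaMeasure ha hr
  inferInstanceAs (IsProbabilityMeasure (Measure.pi _))

lemma memLp_id_gammaPi (ha : 0 < a) (hr : 0 < r) (p : ℝ≥0) : MemLp id p (gammaPi ι a r) :=
  have := isProbabilityMeasure_gammaMeasure ha hr
  MemLp.of_eval fun i =>
    (memLp_id_gammaMeasure ha hr p).comp_measurePreserving (measurePreserving_eval _ i)

lemma integrable_one_add_norm_rpow_gammaPi (ha : 0 < a) (hr : 0 < r) (p : ℝ) :
    Integrable (fun x => (1 + ‖x‖) ^ p) (gammaPi ι a r) := by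
  have := isProbabilityMeasure_gammaPi (ι := ι) ha hr
  have hpow : Integrable (fun x => (1 + ‖x‖) ^ ⌈p⌉₊) (gammaPi ι a r) := by
    have h := ((memLp_const (1 : ℝ)).add
      (memLp_id_gammaPi (ι := ι) ha hr ⌈p⌉₊).norm).integrable_norm_pow' (p := ⌈p⌉₊)
    refine h.congr (.of_forall fun x => ?_)
    simp [abs_of_pos (show (0 : ℝ) < 1 + ‖x‖ by positivity)]
  refine hpow.mono' (Measurable.aestronglyMeasurable (by fun_prop)) (.of_forall fun x => ?_)
  rw [Real.norm_of_nonneg (by positivity), ← Real.rpow_natCast]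
  exact Real.rpow_le_rpow_of_exponent_le (by simp) (Nat.le_ceil p)

lemma integral_gammaPi_stein [DecidableEq ι] (ha : 0 < a) (hr : 0 < r) (i : ι)
    {F F' : (ι → ℝ) → ℝ} (hF : ∀ x, HasDerivAt (fun t => F (update x i t)) (F' x) (x i))
    (hint : Integrable (fun x => x i * F x) (gammaPi ι a r))
    (hint' : Integrable (fun x => x i * F' x + (a - r * x i) * F x) (gammaPi ι a r)) :
    ∫ x, (x i * F' x + (a - r * x i) * F x) ∂gammaPi ι a r = 0 := by
  have := isProbabilityMeasure_gammaMeasure ha hr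
  have hslice : ∀ {G : (ι → ℝ) → ℝ}, Integrable G (gammaPi ι a r) →
      ∀ᵐ x ∂gammaPi ι a r, Integrable (fun t => G (update x i t)) (gammaMeasure a r) :=
    fun hG => ((measurePreserving_update_pi _ i).integrable_comp_of_integrable hG).prod_right_ae
  refine integral_pi_eq_zero_of_ae_integral_update_eq_zero hint' i ?_
  filter_upwards [hslice hint, hslice hint'] with x hx hx'
  simp only [update_self] at hx hx' ⊢
  have hderiv : ∀ t, HasDerivAt (fun s => F (update x i s)) (F' (update x i t)) t := fun t => by
    simpa only [update_idem, update_self] using hF (update x i t)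
  exact integral_gammaMeasure_stein ha hr (hderiv 0).continuousAt.continuousWithinAt
    (fun t _ => hderiv t) hx hx'

lemma gammaPi_eq_withDensity (ha : 0 < a) (hr : 0 < r) :
    gammaPi ι a r = (volume.restrict (univ.pi fun _ : ι => Ioi (0 : ℝ))).withDensity
      fun x => ENNReal.ofReal (∏ i, gammaPDFReal a r (x i)) := by
  have := isProbabilityMeasure_gammaMeasure ha hr
  have hint : IntegrableOn (gammaPDFReal a r) (Ioi 0) := by
    simpa using (integrable_gammaMeasure_iff ha hr (g := fun _ => 1)).1 (integrable_const _)
  simp only [gammaPi, gammaMeasure_eq_withDensity_restrict_Ioi]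
  rw [pi_withDensity_ofReal (fun _ => hint) fun _ => gammaPDFReal_nonneg ha hr, volume_pi,
    Measure.restrict_pi_pi]

lemma absolutelyContinuous_gammaPi (ha : 0 < a) (hr : 0 < r) :
    volume.restrict (univ.pi fun _ : ι => Ioi (0 : ℝ)) ≪ gammaPi ι a r := by
  rw [gammaPi_eq_withDensity ha hr]
  refine withDensity_absolutelyContinuous' (Measurable.aemeasurable (by fun_prop)) ?_
  filter_upwards [ae_restrict_mem (.univ_pi fun _ => measurableSet_Ioi)] with x hx
  exact (ENNReal.ofReal_pos.2 <| Finset.prod_pos fun i _ =>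
    gammaPDFReal_pos ha hr (hx i (mem_univ i))).ne'

lemma setIntegral_pi_Ioi_mul_prod_rpow_mul_exp (ha : 0 < a) (hr : 0 < r) (f : (ι → ℝ) → ℝ) :
    ∫ x in univ.pi fun _ => Ioi 0, f x * ∏ i, x i ^ (a - 1) * Real.exp (-(r * x i)) =
      (Real.Gamma a / r ^ a) ^ Fintype.card ι * ∫ x, f x ∂gammaPi ι a r := by
  rw [gammaPi_eq_withDensity ha hr, integral_withDensity_eq_integral_toReal_smul (by fun_prop)
    (by simp), ← integral_const_mul]
  refine setIntegral_congr_fun (.univ_pi fun _ => measurableSet_Ioi) fun x hx => ?_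
  have hpdf : ∏ i, gammaPDFReal a r (x i) = (r ^ a / Real.Gamma a) ^ Fintype.card ι *
      ∏ i, x i ^ (a - 1) * Real.exp (-(r * x i)) := by
    rw [← Finset.card_univ, Finset.pow_card_mul_prod]
    refine Finset.prod_congr rfl fun i _ => ?_
    rw [gammaPDFReal, if_pos (hx i (mem_univ i)).le, mul_assoc]
  have hconst : Real.Gamma a / r ^ a * (r ^ a / Real.Gamma a) = 1 := by
    have := Real.Gamma_pos_of_pos ha
    field_simp
  rw [ENNReal.toReal_ofReal (Finset.prod_nonneg fun i _ => gammaPDFReal_nonneg ha hr _), hpdf,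
    smul_eq_mul, ← mul_assoc, ← mul_assoc, ← mul_pow, hconst, one_pow, one_mul, mul_comm]

end GammaProduct

section RegularizedReciprocal

open Filter Topology

/-- The regularization of `1 / d` at scale `√ε`, smooth in `d` when `ε > 0`; it is half the
logarithmic derivative of `d ^ 2 + ε`. -/
noncomputable def regInv (ε d : ℝ) : ℝ :=
  d / (d ^ 2 + ε)

@[fun_prop]
lemma measurable_regInv (ε : ℝ) : Measurable (regInv ε) := by
  unfold regInv
  fun_prop

lemma regInv_zero_right (ε : ℝ) : regInv ε 0 = 0 := by
  simp [regInv]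

lemma regInv_neg (ε d : ℝ) : regInv ε (-d) = -regInv ε d := by
  rw [regInv, regInv, neg_sq, neg_div]

lemma abs_regInv_le {ε : ℝ} (hε : 0 < ε) (d : ℝ) : |regInv ε d| ≤ (2 * √ε)⁻¹ := by
  have h := two_mul_le_add_sq |d| √ε
  rw [sq_abs, Real.sq_sqrt hε.le] at h
  rw [regInv, abs_div, abs_of_pos (by positivity : 0 < d ^ 2 + ε), inv_eq_one_div,
    div_le_div_iff₀ (by positivity) (by positivity)]
  linarith

lemma abs_mul_regInv_le_one {ε : ℝ} (hε : 0 ≤ ε) (d : ℝ) : |d * regInv ε d| ≤ 1 := by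
  rw [regInv, mul_div_assoc', ← sq, abs_of_nonneg (by positivity)]
  exact div_le_one_of_le₀ (by linarith) (by positivity)

lemma tendsto_mul_regInv {d : ℝ} (hd : d ≠ 0) :
    Tendsto (fun ε => d * regInv ε d) (𝓝 0) (𝓝 1) := by
  have h : ContinuousAt (fun ε => d * regInv ε d) 0 := by
    unfold regInv
    have : d ^ 2 + 0 ≠ 0 := by simpa using hd
    fun_prop (disch := assumption)
  simpa [ContinuousAt, regInv, sq, mul_div_mul_left, hd] using h

lemma hasDerivAt_sq_sub_add_rpow {ε : ℝ} (hε : 0 < ε) (p c t : ℝ) :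
    HasDerivAt (fun s => ((s - c) ^ 2 + ε) ^ p)
      (((t - c) ^ 2 + ε) ^ p * (2 * p * regInv ε (t - c))) t := by
  have hpos : 0 < (t - c) ^ 2 + ε := by positivity
  have hbase := (((hasDerivAt_id t).sub_const c).fun_pow 2).add_const ε
  refine (hbase.rpow_const (Or.inl hpos.ne')).congr_deriv ?_
  simp only [id, regInv, Real.rpow_sub_one hpos.ne']
  push_cast
  ring

end RegularizedReciprocal

section RegularizedInteraction

open Function Filter Topology

variable {ι : Type*}

lemma prod_offDiag_insert [DecidableEq ι] {M : Type*} [CommMonoid M] {s : Finset ι}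
    {i : ι} (hi : i ∉ s) (f : ι × ι → M) :
    ∏ p ∈ (insert i s).offDiag, f p =
      (∏ p ∈ s.offDiag, f p) * ∏ k ∈ s, f (i, k) * f (k, i) := by
  rw [Finset.offDiag_insert hi, Finset.prod_union, Finset.prod_union, Finset.prod_product,
    Finset.prod_product_right, Finset.prod_singleton, Finset.prod_singleton, mul_assoc,
    Finset.prod_mul_distrib]
  · exact Finset.disjoint_left.2 fun p hp hp' => by grind
  · exact Finset.disjoint_left.2 fun p hp hp' => by grind

lemma hasDerivAt_finsetProd_of_hasDerivAt_mul {κ : Type*} {s : Finset κ} {f : κ → ℝ → ℝ}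
    {c : κ → ℝ} {t : ℝ} (h : ∀ k ∈ s, HasDerivAt (f k) (f k t * c k) t) :
    HasDerivAt (fun u => ∏ k ∈ s, f k u) ((∏ k ∈ s, f k t) * ∑ k ∈ s, c k) t := by
  classical
  refine (HasDerivAt.fun_finsetProd h).congr_deriv ?_
  rw [Finset.mul_sum]
  refine Finset.sum_congr rfl fun k hk => ?_
  rw [smul_eq_mul, ← mul_assoc, Finset.prod_erase_mul _ _ hk]

variable [Fintype ι] {β ε : ℝ}

/-- The regularization of `∏_{j < k} |x_j - x_k|^β` in which `|d|` is replaced by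
`√(d ^ 2 + ε)`, smooth in `x` when `ε > 0`. The exponent is `β / 4` because every unordered
pair occurs twice in `Finset.offDiag`. -/
noncomputable def regInteraction (β ε : ℝ) (x : ι → ℝ) : ℝ :=
  ∏ p ∈ Finset.univ.offDiag, ((x p.1 - x p.2) ^ 2 + ε) ^ (β / 4)

lemma regInteraction_nonneg (hε : 0 ≤ ε) (β : ℝ) (x : ι → ℝ) : 0 ≤ regInteraction β ε x :=
  Finset.prod_nonneg fun _ _ => by positivity

lemma regInteraction_mono (hβ : 0 ≤ β) (hε : 0 ≤ ε) {ε' : ℝ} (h : ε ≤ ε') (x : ι → ℝ) :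
    regInteraction β ε x ≤ regInteraction β ε' x :=
  Finset.prod_le_prod (fun _ _ => by positivity) fun _ _ => by gcongr

lemma regInteraction_le (hβ : 0 ≤ β) (hε : 0 ≤ ε) (x : ι → ℝ) :
    regInteraction β ε x ≤
      (4 * (1 + ε) * (1 + ‖x‖) ^ 2) ^ (β / 4 * (Finset.univ : Finset ι).offDiag.card) := by
  rw [Real.rpow_mul_natCast (by positivity), regInteraction, ← Finset.prod_const]
  refine Finset.prod_le_prod (fun p _ => by positivity) fun p _ => ?_
  have hd : |x p.1 - x p.2| ≤ ‖x‖ + ‖x‖ :=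
    (abs_sub _ _).trans (add_le_add (norm_le_pi_norm x p.1) (norm_le_pi_norm x p.2))
  have hsq : (x p.1 - x p.2) ^ 2 + ε ≤ 4 * (1 + ε) * (1 + ‖x‖) ^ 2 := by
    nlinarith [sq_le_sq₀ (abs_nonneg _) (by positivity) |>.2 hd, sq_abs (x p.1 - x p.2),
      norm_nonneg x, mul_nonneg hε (norm_nonneg x), mul_nonneg hε (sq_nonneg ‖x‖)]
  gcongr

lemma continuous_regInteraction (hβ : 0 ≤ β) :
    Continuous (uncurry (regInteraction β : ℝ → (ι → ℝ) → ℝ)) := by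
  unfold uncurry regInteraction
  have := Real.continuous_rpow_const (q := β / 4) (by positivity)
  fun_prop (disch := positivity)

@[fun_prop]
lemma measurable_regInteraction (β ε : ℝ) :
    Measurable (regInteraction β ε : (ι → ℝ) → ℝ) := by
  unfold regInteraction
  fun_prop

lemma regInteraction_comp_perm (β ε : ℝ) (σ : Equiv.Perm ι) (x : ι → ℝ) :
    regInteraction β ε (x ∘ σ) = regInteraction β ε x :=
  Finset.prod_equiv (σ.prodCongr σ) (by simp) fun _ _ => rfl

lemma regInteraction_update [DecidableEq ι] (hε : 0 < ε) (β : ℝ) (x : ι → ℝ) (i : ι) (t : ℝ) :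
    regInteraction β ε (update x i t) =
      (∏ p ∈ (Finset.univ.erase i).offDiag, ((x p.1 - x p.2) ^ 2 + ε) ^ (β / 4)) *
        ∏ k ∈ Finset.univ.erase i, ((t - x k) ^ 2 + ε) ^ (β / 2) := by
  rw [regInteraction, ← Finset.insert_erase (Finset.mem_univ i),
    prod_offDiag_insert (Finset.notMem_erase _ _), Finset.insert_erase (Finset.mem_univ i)]
  congr 1
  · refine Finset.prod_congr rfl fun p hp => ?_
    obtain ⟨h₁, h₂, -⟩ := Finset.mem_offDiag.1 hp
    rw [update_of_ne (Finset.ne_of_mem_erase h₁), update_of_ne (Finset.ne_of_mem_erase h₂)]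
  · refine Finset.prod_congr rfl fun k hk => ?_
    rw [update_self, update_of_ne (Finset.ne_of_mem_erase hk), sub_sq_comm (x k) t,
      ← Real.rpow_add (by positivity)]
    ring_nf

lemma hasDerivAt_regInteraction_update [DecidableEq ι] (hε : 0 < ε) (β : ℝ) (x : ι → ℝ)
    (i : ι) :
    HasDerivAt (fun t => regInteraction β ε (update x i t))
      (regInteraction β ε x * (β * ∑ k, regInv ε (x i - x k))) (x i) := by
  have hfactor : ∀ k ∈ Finset.univ.erase i, HasDerivAt (fun t => ((t - x k) ^ 2 + ε) ^ (β / 2))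
      (((x i - x k) ^ 2 + ε) ^ (β / 2) * (2 * (β / 2) * regInv ε (x i - x k))) (x i) :=
    fun k _ => hasDerivAt_sq_sub_add_rpow hε _ _ _
  have hx := regInteraction_update hε β x i (x i)
  rw [update_eq_self] at hx
  simp only [regInteraction_update hε]
  refine ((hasDerivAt_finsetProd_of_hasDerivAt_mul hfactor).const_mul _).congr_deriv ?_
  rw [← mul_assoc, ← hx, ← Finset.mul_sum, mul_div_cancel₀ β two_ne_zero,
    ← Finset.add_sum_erase _ _ (Finset.mem_univ i), sub_self, regInv_zero_right, zero_add]

lemma prod_offDiag_eq_prod_lt [LinearOrder ι] {M : Type*} [CommMonoid M] (f : ι × ι → M) :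
    ∏ p ∈ Finset.univ.offDiag, f p = ∏ p : ι × ι with p.1 < p.2, f p * f p.swap := by
  have hswap : ∏ p : ι × ι with p.1 < p.2, f p.swap = ∏ p with p.2 < p.1, f p :=
    Finset.prod_equiv (Equiv.prodComm ι ι) (by simp) fun _ _ => rfl
  rw [Finset.prod_mul_distrib, hswap, ← Finset.prod_union]
  · congr 1
    ext p
    simp [lt_or_lt_iff_ne]
  · exact Finset.disjoint_filter.2 fun p _ h => h.not_gt

lemma regInteraction_zero [LinearOrder ι] (β : ℝ) (x : ι → ℝ) :
    regInteraction β 0 x = ∏ p : ι × ι with p.1 < p.2, |x p.2 - x p.1| ^ β := by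
  rw [regInteraction, prod_offDiag_eq_prod_lt]
  refine Finset.prod_congr rfl fun p _ => ?_
  rw [Prod.fst_swap, Prod.snd_swap, sub_sq_comm (x p.1), ← Real.mul_rpow (by positivity)
    (by positivity), add_zero, ← sq, ← pow_mul, ← Even.pow_abs (by decide), ← Real.rpow_natCast,
    ← Real.rpow_mul (abs_nonneg _)]
  congr 1
  push_cast
  ring

lemma tendsto_regInteraction (hβ : 0 ≤ β) (x : ι → ℝ) :
    Tendsto (fun ε => regInteraction β ε x) (𝓝 0) (𝓝 (regInteraction β 0 x)) :=
  ((continuous_regInteraction hβ).uncurry_right x).tendsto 0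

lemma regInteraction_zero_pos (β : ℝ) {x : ι → ℝ} (hx : Injective x) :
    0 < regInteraction β 0 x := by
  refine Finset.prod_pos fun p hp => Real.rpow_pos_of_pos ?_ _
  have hne : x p.1 - x p.2 ≠ 0 := sub_ne_zero.2 (hx.ne (Finset.mem_offDiag.1 hp).2.2)
  positivity

lemma regInteraction_zero_eq_zero (hβ : β ≠ 0) {x : ι → ℝ} {i k : ι} (hik : i ≠ k)
    (hx : x i = x k) : regInteraction β 0 x = 0 :=
  Finset.prod_eq_zero (i := (i, k)) (by simpa using hik) (by simp [hx, hβ])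

lemma tendsto_regInteraction_mul_regInv (hβ : 0 < β) (x : ι → ℝ) {i k : ι} (hik : i ≠ k) :
    Tendsto (fun ε => regInteraction β ε x * ((x i - x k) * regInv ε (x i - x k))) (𝓝 0)
      (𝓝 (regInteraction β 0 x)) := by
  rcases eq_or_ne (x i) (x k) with hx | hx
  · simp [regInteraction_zero_eq_zero hβ.ne' hik hx, hx]
  · simpa using (tendsto_regInteraction hβ.le x).mul (tendsto_mul_regInv (sub_ne_zero.2 hx))

end RegularizedInteraction

section AomotoRecursion

open Function Filter Topology ProbabilityTheory

variable {ι : Type*} [Fintype ι] {a r β ε : ℝ}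

lemma integrable_prod_mul_regInteraction (ha : 0 < a) (hr : 0 < r) (hβ : 0 ≤ β) (hε : 0 ≤ ε)
    (A : Finset ι) :
    Integrable (fun x => (∏ j ∈ A, x j) * regInteraction β ε x) (gammaPi ι a r) := by
  set q : ℝ := β / 4 * (Finset.univ : Finset ι).offDiag.card
  refine ((integrable_one_add_norm_rpow_gammaPi ha hr (A.card + 2 * q)).const_mul
    ((4 * (1 + ε)) ^ q)).mono' (Measurable.aestronglyMeasurable (by fun_prop))
    (.of_forall fun x => ?_)
  have hprod : |∏ j ∈ A, x j| ≤ (1 + ‖x‖) ^ A.card := by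
    rw [Finset.abs_prod, ← Finset.prod_const]
    refine Finset.prod_le_prod (fun _ _ => abs_nonneg _) fun j _ => ?_
    exact (norm_le_pi_norm x j).trans (le_add_of_nonneg_left zero_le_one)
  calc ‖(∏ j ∈ A, x j) * regInteraction β ε x‖
      = |∏ j ∈ A, x j| * regInteraction β ε x := by
        rw [Real.norm_eq_abs, abs_mul, abs_of_nonneg (regInteraction_nonneg hε β x)]
    _ ≤ (1 + ‖x‖) ^ A.card * (4 * (1 + ε) * (1 + ‖x‖) ^ 2) ^ q := by
        gcongr
        · exact regInteraction_nonneg hε β x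
        · exact regInteraction_le hβ hε x
    _ = (4 * (1 + ε)) ^ q * (1 + ‖x‖) ^ (A.card + 2 * q) := by
        rw [Real.mul_rpow (by positivity) (by positivity), Real.rpow_add (by positivity),
          Real.rpow_natCast, Real.rpow_mul (x := 1 + ‖x‖) (by positivity) 2 q, Real.rpow_two]
        ring

lemma integrable_prod_mul_regInteraction_mul (ha : 0 < a) (hr : 0 < r) (hβ : 0 ≤ β)
    (hε : 0 ≤ ε) (A : Finset ι) {q : (ι → ℝ) → ℝ} (hq : Measurable q) {C : ℝ}
    (hqC : ∀ x, |q x| ≤ C) :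
    Integrable (fun x => (∏ j ∈ A, x j) * (regInteraction β ε x * q x)) (gammaPi ι a r) := by
  simp only [← mul_assoc]
  exact (integrable_prod_mul_regInteraction ha hr hβ hε A).mul_bdd hq.aestronglyMeasurable
    (.of_forall hqC)

lemma tendsto_integral_prod_mul_regInteraction_mul (ha : 0 < a) (hr : 0 < r) (hβ : 0 ≤ β)
    (A : Finset ι) {q : ℝ → (ι → ℝ) → ℝ} (hq : ∀ ε, Measurable (q ε))
    (hq1 : ∀ ε, 0 ≤ ε → ∀ x, |q ε x| ≤ 1) (hlim : ∀ x,
      Tendsto (fun ε => regInteraction β ε x * q ε x) (𝓝[>] 0) (𝓝 (regInteraction β 0 x))) :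
    Tendsto (fun ε => ∫ x, (∏ j ∈ A, x j) * (regInteraction β ε x * q ε x) ∂gammaPi ι a r)
      (𝓝[>] 0) (𝓝 (∫ x, (∏ j ∈ A, x j) * regInteraction β 0 x ∂gammaPi ι a r)) := by
  refine tendsto_integral_filter_of_dominated_convergence
    (fun x => ‖(∏ j ∈ A, x j) * regInteraction β 1 x‖)
    (.of_forall fun ε => Measurable.aestronglyMeasurable (by fun_prop)) ?_
    (integrable_prod_mul_regInteraction ha hr hβ zero_le_one A).norm
    (.of_forall fun x => (hlim x).const_mul _)
  filter_upwards [Ioc_mem_nhdsGT zero_lt_one] with ε ⟨hε, hε1⟩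
  refine .of_forall fun x => ?_
  simp only [norm_mul]
  gcongr
  calc ‖regInteraction β ε x‖ * ‖q ε x‖ ≤ ‖regInteraction β ε x‖ * 1 := by
        gcongr
        exact hq1 ε hε.le x
    _ ≤ ‖regInteraction β 1 x‖ := by
        rw [mul_one, Real.norm_of_nonneg (regInteraction_nonneg hε.le β x),
          Real.norm_of_nonneg (regInteraction_nonneg zero_le_one β x)]
        exact regInteraction_mono hβ hε.le hε1 x

lemma integral_prod_mul_regInv_of_mem (ha : 0 < a) (hr : 0 < r) (hβ : 0 ≤ β) (hε : 0 < ε)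
    {B : Finset ι} {i k : ι} (hi : i ∈ B) (hk : k ∈ B) :
    ∫ x, (∏ j ∈ B, x j) * (regInteraction β ε x * regInv ε (x i - x k)) ∂gammaPi ι a r = 0 := by
  classical
  have := isProbabilityMeasure_gammaMeasure ha hr
  rw [gammaPi, integral_pi_eq_half_integral_add_comp_perm (Equiv.swap i k)
    (integrable_prod_mul_regInteraction_mul ha hr hβ hε.le B (by fun_prop)
      fun x => abs_regInv_le hε _)]
  have hanti : ∀ x : ι → ℝ,
      (∏ j ∈ B, x j) * (regInteraction β ε x * regInv ε (x i - x k)) +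
        (∏ j ∈ B, (x ∘ Equiv.swap i k) j) * (regInteraction β ε (x ∘ Equiv.swap i k) *
          regInv ε ((x ∘ Equiv.swap i k) i - (x ∘ Equiv.swap i k) k)) = 0 := fun x => by
    have hprod : ∏ j ∈ B, (x ∘ Equiv.swap i k) j = ∏ j ∈ B, x j :=
      Finset.prod_equiv (Equiv.swap i k) (fun j => by grind) fun _ _ => rfl
    rw [hprod, regInteraction_comp_perm, comp_apply, comp_apply, Equiv.swap_apply_left,
      Equiv.swap_apply_right, ← neg_sub (x i), regInv_neg]
    ring
  simp only [hanti, integral_zero, zero_div]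

lemma integral_prod_insert_mul_regInv_of_notMem [DecidableEq ι] (ha : 0 < a) (hr : 0 < r)
    (hβ : 0 ≤ β) (hε : 0 < ε) {A : Finset ι} {i k : ι} (hi : i ∉ A) (hk : k ∉ insert i A) :
    ∫ x, (∏ j ∈ insert i A, x j) * (regInteraction β ε x * regInv ε (x i - x k))
        ∂gammaPi ι a r =
      (∫ x, (∏ j ∈ A, x j) * (regInteraction β ε x * ((x i - x k) * regInv ε (x i - x k)))
        ∂gammaPi ι a r) / 2 := by
  have := isProbabilityMeasure_gammaMeasure ha hr
  rw [gammaPi, integral_pi_eq_half_integral_add_comp_perm (Equiv.swap i k)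
    (integrable_prod_mul_regInteraction_mul ha hr hβ hε.le _ (by fun_prop)
      fun x => abs_regInv_le hε _)]
  congr 1
  refine integral_congr_ae (.of_forall fun x => ?_)
  have hprod : ∏ j ∈ A, x (Equiv.swap i k j) = ∏ j ∈ A, x j :=
    Finset.prod_congr rfl fun j hj => by
      rw [Equiv.swap_apply_of_ne_of_ne (by grind) (by grind)]
  simp only [Finset.prod_insert hi, regInteraction_comp_perm, comp_apply, hprod,
    Equiv.swap_apply_left, Equiv.swap_apply_right]
  rw [← neg_sub (x i), regInv_neg]
  ring

lemma sum_integral_prod_insert_mul_regInv [DecidableEq ι] (ha : 0 < a) (hr : 0 < r)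
    (hβ : 0 ≤ β) (hε : 0 < ε) {A : Finset ι} {i : ι} (hi : i ∉ A) :
    ∑ k, ∫ x, (∏ j ∈ insert i A, x j) * (regInteraction β ε x * regInv ε (x i - x k))
        ∂gammaPi ι a r =
      (∑ k ∈ (insert i A)ᶜ, ∫ x, (∏ j ∈ A, x j) *
        (regInteraction β ε x * ((x i - x k) * regInv ε (x i - x k))) ∂gammaPi ι a r) / 2 := by
  rw [← Finset.sum_add_sum_compl (insert i A), Finset.sum_eq_zero fun k hk =>
    integral_prod_mul_regInv_of_mem ha hr hβ hε (Finset.mem_insert_self i A) hk, zero_add,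
    Finset.sum_div]
  exact Finset.sum_congr rfl fun k hk =>
    integral_prod_insert_mul_regInv_of_notMem ha hr hβ hε hi (Finset.mem_compl.1 hk)

lemma hasDerivAt_prod_mul_regInteraction_update [DecidableEq ι] (hε : 0 < ε) (β : ℝ)
    {A : Finset ι} {i : ι} (hi : i ∉ A) (x : ι → ℝ) :
    HasDerivAt (fun t => (∏ j ∈ A, update x i t j) * regInteraction β ε (update x i t))
      ((∏ j ∈ A, x j) * (regInteraction β ε x * (β * ∑ k, regInv ε (x i - x k)))) (x i) := by
  simp only [Finset.prod_update_of_notMem hi]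
  exact (hasDerivAt_regInteraction_update hε β x i).const_mul _

lemma integral_prod_insert_mul_regInteraction_of_pos [DecidableEq ι] (ha : 0 < a) (hr : 0 < r)
    (hβ : 0 ≤ β) (hε : 0 < ε) {A : Finset ι} {i : ι} (hi : i ∉ A) :
    r * ∫ x, (∏ j ∈ insert i A, x j) * regInteraction β ε x ∂gammaPi ι a r =
      a * ∫ x, (∏ j ∈ A, x j) * regInteraction β ε x ∂gammaPi ι a r +
        β * ∑ k, ∫ x, (∏ j ∈ insert i A, x j) *
          (regInteraction β ε x * regInv ε (x i - x k)) ∂gammaPi ι a r := by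
  have hA := integrable_prod_mul_regInteraction (ι := ι) ha hr hβ hε.le A
  have hiA := integrable_prod_mul_regInteraction (ι := ι) ha hr hβ hε.le (insert i A)
  have hinv : ∀ k, Integrable (fun x => (∏ j ∈ insert i A, x j) *
      (regInteraction β ε x * regInv ε (x i - x k))) (gammaPi ι a r) := fun k =>
    integrable_prod_mul_regInteraction_mul ha hr hβ hε.le _ (by fun_prop)
      fun x => abs_regInv_le hε _
  have _ := integrable_finsetSum Finset.univ fun k _ => hinv k
  have hexpand : ∀ x : ι → ℝ,
      x i * ((∏ j ∈ A, x j) * (regInteraction β ε x * (β * ∑ k, regInv ε (x i - x k)))) +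
          (a - r * x i) * ((∏ j ∈ A, x j) * regInteraction β ε x) =
        β * ∑ k, (∏ j ∈ insert i A, x j) * (regInteraction β ε x * regInv ε (x i - x k)) +
          a * ((∏ j ∈ A, x j) * regInteraction β ε x) -
          r * ((∏ j ∈ insert i A, x j) * regInteraction β ε x) := fun x => by
    rw [← Finset.mul_sum, ← Finset.mul_sum, Finset.prod_insert hi]
    ring
  have hstein : ∫ x,
      (β * ∑ k, (∏ j ∈ insert i A, x j) * (regInteraction β ε x * regInv ε (x i - x k)) +
        a * ((∏ j ∈ A, x j) * regInteraction β ε x) -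
        r * ((∏ j ∈ insert i A, x j) * regInteraction β ε x)) ∂gammaPi ι a r = 0 := by
    simp only [← hexpand]
    refine integral_gammaPi_stein ha hr i
      (hasDerivAt_prod_mul_regInteraction_update hε β hi) ?_ ?_
    · simpa only [Finset.prod_insert hi, mul_assoc] using hiA
    · simp only [hexpand]
      fun_prop
  rw [integral_sub (by fun_prop) (by fun_prop), integral_add (by fun_prop) (by fun_prop),
    integral_const_mul, integral_const_mul, integral_const_mul,
    integral_finsetSum _ fun k _ => hinv k] at hstein
  linarith

lemma integral_prod_insert_mul_regInteraction_zero [DecidableEq ι] (ha : 0 < a) (hr : 0 < r)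
    (hβ : 0 < β) {A : Finset ι} {i : ι} (hi : i ∉ A) :
    r * ∫ x, (∏ j ∈ insert i A, x j) * regInteraction β 0 x ∂gammaPi ι a r =
      (a + (Fintype.card ι - (A.card + 1)) * β / 2) *
        ∫ x, (∏ j ∈ A, x j) * regInteraction β 0 x ∂gammaPi ι a r := by
  have hlim : ∀ B : Finset ι,
      Tendsto (fun ε => ∫ x, (∏ j ∈ B, x j) * regInteraction β ε x ∂gammaPi ι a r) (𝓝[>] 0)
        (𝓝 (∫ x, (∏ j ∈ B, x j) * regInteraction β 0 x ∂gammaPi ι a r)) := fun B => by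
    simpa using tendsto_integral_prod_mul_regInteraction_mul ha hr hβ.le B (q := fun _ _ => 1)
      (fun _ => measurable_const) (by simp)
      fun x => by simpa using (tendsto_regInteraction hβ.le x).mono_left nhdsWithin_le_nhds
  have hlim_inv : ∀ k ∈ (insert i A)ᶜ, Tendsto (fun ε => ∫ x, (∏ j ∈ A, x j) *
        (regInteraction β ε x * ((x i - x k) * regInv ε (x i - x k))) ∂gammaPi ι a r) (𝓝[>] 0)
      (𝓝 (∫ x, (∏ j ∈ A, x j) * regInteraction β 0 x ∂gammaPi ι a r)) := fun k hk => by
    have hik : i ≠ k := by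
      rintro rfl
      simp at hk
    exact tendsto_integral_prod_mul_regInteraction_mul ha hr hβ.le A
      (fun ε => by fun_prop) (fun ε hε x => abs_mul_regInv_le_one hε _)
      fun x => (tendsto_regInteraction_mul_regInv hβ x hik).mono_left nhdsWithin_le_nhds
  have hcard : ((insert i A)ᶜ.card : ℝ) = Fintype.card ι - (A.card + 1) := by
    rw [Finset.card_compl, Nat.cast_sub (Finset.card_le_univ _),
      Finset.card_insert_of_notMem hi]
    push_cast
    ring
  have hright := ((hlim A).const_mul a).add
    (((tendsto_finsetSum _ hlim_inv).div_const 2).const_mul β)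
  rw [Finset.sum_const, nsmul_eq_mul, hcard] at hright
  have heq := tendsto_nhds_unique_of_eventuallyEq ((hlim (insert i A)).const_mul r) hright <| by
    filter_upwards [self_mem_nhdsWithin] with ε hε
    rw [integral_prod_insert_mul_regInteraction_of_pos ha hr hβ.le hε hi,
      sum_integral_prod_insert_mul_regInv ha hr hβ.le hε hi]
  rw [heq]
  ring

lemma integral_prod_mul_regInteraction_zero (ha : 0 < a) (hr : 0 < r) (hβ : 0 < β)
    (A : Finset ι) :
    r ^ A.card * ∫ x, (∏ j ∈ A, x j) * regInteraction β 0 x ∂gammaPi ι a r =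
      (∏ j ∈ Finset.range A.card, (a + (Fintype.card ι - (j + 1)) * β / 2)) *
        ∫ x, regInteraction β 0 x ∂gammaPi ι a r := by
  classical
  induction A using Finset.induction_on with
  | empty => simp
  | insert i A hi ih =>
    rw [Finset.card_insert_of_notMem hi, pow_succ, mul_assoc,
      integral_prod_insert_mul_regInteraction_zero ha hr hβ hi, mul_left_comm, ih,
      Finset.prod_range_succ]
    ring

end AomotoRecursion

section LaguerreEnsemble

open Set Function

variable {ι : Type*} [Fintype ι] {a r β : ℝ}

lemma integral_regInteraction_zero_pos (ha : 0 < a) (hr : 0 < r) (hβ : 0 ≤ β) :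
    0 < ∫ x, regInteraction β 0 x ∂gammaPi ι a r := by
  have hint : Integrable (regInteraction β 0) (gammaPi ι a r) := by
    simpa using integrable_prod_mul_regInteraction ha hr hβ le_rfl ∅
  have hcont : Continuous (regInteraction β 0 : (ι → ℝ) → ℝ) :=
    (continuous_regInteraction hβ).uncurry_left 0
  have hopen := hcont.isOpen_support
  have horthant : IsOpen (univ.pi fun _ : ι => Ioi (0 : ℝ)) :=
    isOpen_set_pi finite_univ fun _ _ => isOpen_Ioi
  obtain ⟨x₀, hx₀, hpos⟩ : ∃ x₀ : ι → ℝ, Injective x₀ ∧ ∀ i, 0 < x₀ i :=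
    ⟨fun i => Fintype.equivFin ι i + 1, fun i j h => by simpa [Fin.val_inj] using h,
      fun i => by positivity⟩
  have hvol : volume (support (regInteraction β 0) ∩ univ.pi fun _ : ι => Ioi (0 : ℝ)) ≠ 0 :=
    ((hopen.inter horthant).measure_pos volume ⟨x₀, (regInteraction_zero_pos β hx₀).ne',
      fun i _ => hpos i⟩).ne'
  rw [integral_pos_iff_support_of_nonneg (regInteraction_nonneg le_rfl β) hint, pos_iff_ne_zero]
  exact fun h => hvol <| by
    rw [← Measure.restrict_apply hopen.measurableSet]
    exact absolutelyContinuous_gammaPi ha hr h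

lemma integral_sum_powersetCard_prod_mul_regInteraction_zero (ha : 0 < a) (hr : 0 < r)
    (hβ : 0 < β) (l : ℕ) :
    r ^ l * ∫ x, (∑ S ∈ Finset.univ.powersetCard l, ∏ j ∈ S, x j) * regInteraction β 0 x
        ∂gammaPi ι a r =
      (Fintype.card ι).choose l *
        (∏ j ∈ Finset.range l, (a + (Fintype.card ι - (j + 1)) * β / 2)) *
        ∫ x, regInteraction β 0 x ∂gammaPi ι a r := by
  have hterm : ∀ S ∈ (Finset.univ : Finset ι).powersetCard l,
      r ^ l * ∫ x, (∏ j ∈ S, x j) * regInteraction β 0 x ∂gammaPi ι a r =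
        (∏ j ∈ Finset.range l, (a + (Fintype.card ι - (j + 1)) * β / 2)) *
          ∫ x, regInteraction β 0 x ∂gammaPi ι a r := fun S hS => by
    rw [← (Finset.mem_powersetCard.1 hS).2, integral_prod_mul_regInteraction_zero ha hr hβ]
  simp only [Finset.sum_mul]
  rw [integral_finsetSum _ fun S _ => integrable_prod_mul_regInteraction ha hr hβ.le le_rfl S,
    Finset.mul_sum, Finset.sum_congr rfl hterm, Finset.sum_const, Finset.card_powersetCard,
    Finset.card_univ, nsmul_eq_mul, mul_assoc]

lemma setIntegral_mul_laguerreWeight_mul_interaction {N : ℕ} (ha : -1 < a) (β : ℝ)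
    (f : (Fin N → ℝ) → ℝ) :
    ∫ x in univ.pi fun _ => Ioi 0,
        f x * ((∏ i, x i ^ a * Real.exp (-x i)) * interaction N β x) =
      Real.Gamma (a + 1) ^ N *
        ∫ x, f x * regInteraction β 0 x ∂gammaPi (Fin N) (a + 1) 1 := by
  have h := setIntegral_pi_Ioi_mul_prod_rpow_mul_exp (neg_lt_iff_pos_add.1 ha) one_pos
    fun x : Fin N → ℝ => f x * regInteraction β 0 x
  simp only [add_sub_cancel_right, one_mul, Real.one_rpow, div_one, Fintype.card_fin] at h
  rw [← h]
  congr 1 with x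
  rw [interaction, regInteraction_zero]
  ring

end LaguerreEnsemble

/-- The Laguerre `β`-ensemble average of the `l`-th elementary symmetric polynomial:
`⟨e_l⟩ = C(N,l) ∏_{j=1}^{l} (a + 1 + (N-j)β/2)`. -/
theorem laguerre_beta_ensemble_average_esym (β : ℝ) (hβ : 0 < β) (N : ℕ) (hN : 0 < N)
    (a : ℝ) (ha : -1 < a) (l : ℕ) (hl : l ≤ N) :
    (∫ x in Set.univ.pi (fun _ : Fin N => Set.Ioi (0 : ℝ)),
        esym N l x * ((∏ i, x i ^ a * Real.exp (-x i)) * interaction N β x)) /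
      (∫ x in Set.univ.pi (fun _ : Fin N => Set.Ioi (0 : ℝ)),
        (∏ i, x i ^ a * Real.exp (-x i)) * interaction N β x)
      = (N.choose l : ℝ) *
          ∏ j ∈ Finset.range l, (a + 1 + ((N : ℝ) - (j + 1)) * β / 2) := by
  have ha1 : 0 < a + 1 := by linarith
  have hΓ : Real.Gamma (a + 1) ^ N ≠ 0 := pow_ne_zero _ (Real.Gamma_pos_of_pos ha1).ne'
  have hden := setIntegral_mul_laguerreWeight_mul_interaction (N := N) ha β fun _ => 1
  have hesym : ∫ x, esym N l x * regInteraction β 0 x ∂gammaPi (Fin N) (a + 1) 1 =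
      N.choose l * (∏ j ∈ Finset.range l, (a + 1 + ((N : ℝ) - (j + 1)) * β / 2)) *
        ∫ x, regInteraction β 0 x ∂gammaPi (Fin N) (a + 1) 1 := by
    simpa only [esym, one_pow, one_mul, Fintype.card_fin] using
      integral_sum_powersetCard_prod_mul_regInteraction_zero (ι := Fin N) ha1 one_pos hβ l
  simp only [one_mul] at hden
  rw [setIntegral_mul_laguerreWeight_mul_interaction ha, hden, mul_div_mul_left _ _ hΓ, hesym,
    mul_div_cancel_right₀ _ (integral_regInteraction_zero_pos ha1 one_pos hβ.le).ne']
end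

section
/- Let β > 0, let N be a positive integer, let 0 ≤ l ≤ N, and let a > −1 and b be real with b > a + (N−1)β + l + 1. Then the Cauchy-type β-ensemble average of the l-th elementary symmetric polynomial is ⟨e_l⟩ = C(N,l) · ∏_{j=1}^{l} (a + 1 + (N−j)β/2)/(b − a − 2 − (2N−j−1)β/2), where C(N,l) is the binomial coefficient. Explicitly: ∫_{(0,∞)^N} e_l(x) ∏_{i=1}^N x_i^a (1+x_i)^{−b} ∏_{1≤j<k≤N} |x_k−x_j|^β dx divided by ∫_{(0,∞)^N} ∏_{i=1}^N x_i^a (1+x_i)^{−b} ∏_{1≤j<k≤N} |x_k−x_j|^β dx equals C(N,l) ∏_{j=1}^{l} (a+1+(N−j)β/2)/(b−a−2−(2N−j−1)β/2). -/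
open MeasureTheory

/-!
The idea is Aomoto's: integrate a total derivative. In the coordinates `u i = log (x i)` let `ρ` be
the density with respect to `du`; for `m ∉ S` the derivative of `(∏ i ∈ S, x i) * (1 + x m) * ρ`
along `u m` integrates to zero. The factor `1 + x m` clears the denominator of `x ∂ₓ log (1 + x)`,
and `(x m - x j)²` contributes `1 + κ` with `κ = (x m + x j) / (x m - x j)`, antisymmetric in
`m` and `j`. By symmetry `κ` times a monomial averages to zero when `m` and
`j` are both in the monomial or both outside; when only `m` is, symmetrising turns `κ * x m` into
`(x m + x j) / 2`, which has the same average as `x m`, and the sign is reversed when only `j` is.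
The identity therefore relates only the moments of `S` and of `insert m S`, and the product formula
is the solution of this two-term recursion. As the monomials have degree at most one in each
variable, the integrability of one degree suffices for all of them.

For small `β` the derivative has a non-integrable singularity at `x m = x j`. It is avoided by
replacing `(x - y)²` with `|x - e^{iθ} y|²`: since this is still homogeneous of degree two, its
logarithmic derivatives keep the form `1 ± κ`, with `κ` antisymmetric but now bounded, and `θ → 0`
is taken at the level of the moments.
-/

open Real Finset Filter Topology

section Prelim

theorem map_swap_eq_self {ι : Type*} [DecidableEq ι] {S : Finset ι} {m j : ι}
    (h : m ∈ S ↔ j ∈ S) :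
    S.map (Equiv.swap m j).toEmbedding = S := by
  ext i
  rw [mem_map_equiv, Equiv.symm_swap]
  rcases eq_or_ne i m with rfl | hm
  · simp [h]
  rcases eq_or_ne i j with rfl | hj
  · simp [h]
  rw [Equiv.swap_apply_of_ne_of_ne hm hj]

theorem map_swap_insert {ι : Type*} [DecidableEq ι] {S : Finset ι} {m j : ι} (hm : m ∉ S)
    (hj : j ∉ S) :
    (insert m S).map (Equiv.swap m j).toEmbedding = insert j S := by
  simp [map_insert, map_swap_eq_self (iff_of_false hm hj)]

variable {ι : Type*} [Fintype ι]

@[to_additive]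
theorem prod_prod_compl_singleton_comm {M : Type*} [DecidableEq ι] [CommMonoid M]
    (f : ι → ι → M) :
    ∏ i, ∏ j ∈ ({i}ᶜ : Finset ι), f i j = ∏ i, ∏ j ∈ ({i}ᶜ : Finset ι), f j i :=
  prod_comm' (by simp [eq_comm])

theorem cast_card_compl_singleton [DecidableEq ι] (i : ι) :
    (#({i}ᶜ : Finset ι) : ℝ) = Fintype.card ι - 1 := by
  rw [card_compl, card_singleton, Nat.cast_pred (Fintype.card_pos_iff.mpr ⟨i⟩)]

theorem integral_comp_perm (σ : Equiv.Perm ι) (f : (ι → ℝ) → ℝ) :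
    ∫ u : ι → ℝ, f (u ∘ σ) = ∫ u, f u :=
  (volume_preserving_arrowCongr' σ.symm (.refl ℝ) (.id _)).integral_comp' f

theorem ae_apply_ne_apply {i j : ι} (hij : i ≠ j) : ∀ᵐ u : ι → ℝ, u i ≠ u j := by
  classical
  let V : Submodule ℝ (ι → ℝ) :=
    LinearMap.ker (LinearMap.proj (R := ℝ) (φ := fun _ => ℝ) i - LinearMap.proj j)
  have hV : V ≠ ⊤ := fun h => by
    have : (Pi.single i 1 : ι → ℝ) ∈ V := h ▸ Submodule.mem_top
    simp [V, hij.symm] at this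
  refine measure_mono_null (fun u hu => ?_) (Measure.addHaar_submodule volume V hV)
  simpa [V, sub_eq_zero] using hu

theorem integral_eq_zero_of_hasLineDerivAt {E F : Type*} [NormedAddCommGroup E] [NormedSpace ℝ E]
    [FiniteDimensional ℝ E] [MeasurableSpace E] [BorelSpace E] [NormedAddCommGroup F]
    [NormedSpace ℝ F] {μ : Measure E} [μ.IsAddHaarMeasure] {f f' : E → F} {v : E}
    (hf : Integrable f μ) (hf' : Integrable f' μ) (h : ∀ x, HasLineDerivAt ℝ f (f' x) x v) :
    ∫ x, f' x ∂μ = 0 := by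
  simpa using integral_bilinear_hasLineDerivAt_right_eq_neg_left_of_integrable
    (B := ContinuousLinearMap.lsmul ℝ ℝ) (f := fun _ : E => (1 : ℝ)) (f' := fun _ => 0)
    (by simp) (by simpa using hf') (by simpa using hf)
    (fun x _ => hasDerivAt_const (0 : ℝ) (1 : ℝ)) (fun x _ => h x)

theorem setIntegral_pi_Ioi_eq_integral_exp {E : Type*} [NormedAddCommGroup E] [NormedSpace ℝ E]
    (f : (ι → ℝ) → E) :
    ∫ x in Set.univ.pi (fun _ : ι => Set.Ioi (0 : ℝ)), f x =
      ∫ u : ι → ℝ, (∏ i, exp (u i)) • f (fun i => exp (u i)) := by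
  let F : (ι → ℝ) → ι → ℝ := fun u i => exp (u i)
  let F' : (ι → ℝ) → (ι → ℝ) →L[ℝ] (ι → ℝ) := fun u =>
    .pi fun i => (exp (u i) • ContinuousLinearMap.id ℝ ℝ).comp (.proj i)
  have hF (u) : HasFDerivAt F (F' u) u :=
    hasFDerivAt_pi.mpr fun i => by simpa using! (hasFDerivAt_apply i u).exp
  have hinj : F.Injective := exp_injective.comp_left
  have himg : F '' Set.univ = Set.univ.pi fun _ => Set.Ioi 0 := by
    rw [Set.image_univ, ← range_exp, ← Set.range_piMap]
    rfl
  have hdet (u) : |(F' u).det| = ∏ i, exp (u i) := by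
    rw [ContinuousLinearMap.det_pi, abs_prod]
    simp
  rw [← himg, integral_image_eq_integral_abs_det_fderiv_smul volume .univ
    (fun u _ => (hF u).hasFDerivWithinAt) hinj.injOn, setIntegral_univ]
  simp only [hdet, F]

end Prelim

section PairInteraction

/-- The squared distance `|x - e^{iθ} y|² = x² + y² - 2cxy`, `c = cos θ`, between `x` and the point
`y` rotated by an angle `θ`. For `c < 1` it is a smooth replacement of `(x - y)²`, the case `c = 1`,
which is still homogeneous in `(x, y)`. -/
def regDistSq (c x y : ℝ) : ℝ := x ^ 2 + y ^ 2 - 2 * c * x * y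

/-- The antisymmetric part of the logarithmic derivative of `regDistSq`, on a logarithmic scale:
`x ∂ₓ log (regDistSq c x y) = 1 + pairForce c x y` and, by homogeneity,
`y ∂_y log (regDistSq c x y) = 1 - pairForce c x y`. -/
noncomputable def pairForce (c x y : ℝ) : ℝ := (x ^ 2 - y ^ 2) / regDistSq c x y

variable {c x y : ℝ}

theorem regDistSq_comm (c x y : ℝ) : regDistSq c x y = regDistSq c y x := by
  unfold regDistSq
  ring

theorem regDistSq_one (x y : ℝ) : regDistSq 1 x y = (x - y) ^ 2 := by
  unfold regDistSq
  ring

theorem regDistSq_eq_sq_sub_add (c x y : ℝ) :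
    regDistSq c x y = (x - y) ^ 2 + 2 * (1 - c) * (x * y) := by
  unfold regDistSq
  ring

theorem sq_sub_le_regDistSq (hc : c ≤ 1) (hx : 0 ≤ x) (hy : 0 ≤ y) :
    (x - y) ^ 2 ≤ regDistSq c x y := by
  rw [regDistSq_eq_sq_sub_add, le_add_iff_nonneg_right]
  exact mul_nonneg (by linarith) (by positivity)

theorem regDistSq_nonneg (hc : c ≤ 1) (hx : 0 ≤ x) (hy : 0 ≤ y) : 0 ≤ regDistSq c x y :=
  (sq_nonneg _).trans (sq_sub_le_regDistSq hc hx hy)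

theorem regDistSq_pos (hc : c < 1) (hx : 0 < x) (hy : 0 < y) : 0 < regDistSq c x y := by
  rw [regDistSq_eq_sq_sub_add]
  exact add_pos_of_nonneg_of_pos (sq_nonneg _) (mul_pos (by linarith) (by positivity))

theorem regDistSq_le_sq_mul_one_add (hc : -1 ≤ c) (hx : 0 ≤ x) (hy : 0 ≤ y) :
    regDistSq c x y ≤ ((1 + x) * (1 + y)) ^ 2 := by
  have hxy : 0 ≤ x * y := by positivity
  calc regDistSq c x y ≤ (x + y) ^ 2 := by unfold regDistSq; nlinarith
    _ ≤ ((1 + x) * (1 + y)) ^ 2 := by gcongr; linarith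

theorem pairForce_swap (c x y : ℝ) : pairForce c y x = -pairForce c x y := by
  rw [pairForce, pairForce, regDistSq_comm, ← neg_div, neg_sub]

theorem abs_pairForce_le (hc : 0 ≤ c) (hc' : c < 1) : |pairForce c x y| ≤ 1 / (1 - c) := by
  have h1c : 0 < 1 - c := sub_pos.mpr hc'
  have hD : (1 - c) * (x ^ 2 + y ^ 2) ≤ regDistSq c x y := by
    unfold regDistSq
    nlinarith [mul_nonneg hc (sq_nonneg (x - y))]
  have hD' : 0 ≤ regDistSq c x y := le_trans (by positivity) hD
  rw [pairForce, abs_div, abs_of_nonneg hD']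
  refine div_le_of_le_mul₀ hD' (by positivity) ?_
  rw [one_div, ← div_eq_inv_mul, le_div_iff₀' h1c]
  refine le_trans ?_ hD
  gcongr
  exact abs_sub_le_iff.mpr ⟨by nlinarith [sq_nonneg y], by nlinarith [sq_nonneg x]⟩

theorem sub_mul_pairForce (c x y : ℝ) :
    (x - y) * pairForce c x y = (x + y) * ((x - y) ^ 2 / regDistSq c x y) := by
  rw [pairForce]
  ring

theorem abs_sq_sub_div_regDistSq_le_one (hc : c ≤ 1) (hx : 0 ≤ x) (hy : 0 ≤ y) :
    |(x - y) ^ 2 / regDistSq c x y| ≤ 1 := by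
  have hD := regDistSq_nonneg hc hx hy
  rw [abs_of_nonneg (by positivity)]
  exact div_le_one_of_le₀ (sq_sub_le_regDistSq hc hx hy) hD

theorem tendsto_sq_sub_div_regDistSq (hxy : x ≠ y) :
    Tendsto (fun c => (x - y) ^ 2 / regDistSq c x y) (𝓝 1) (𝓝 1) := by
  have hxy' : (x - y) ^ 2 ≠ 0 := pow_ne_zero 2 (sub_ne_zero.mpr hxy)
  have h : ContinuousAt (fun c => (x - y) ^ 2 / regDistSq c x y) 1 := by
    refine continuousAt_const.div ?_ (by rwa [regDistSq_one])
    unfold regDistSq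
    fun_prop
  simpa [ContinuousAt, regDistSq_one, hxy'] using h

end PairInteraction

section LogDensity

variable {ι : Type*} [Fintype ι] [DecidableEq ι] {a b β c : ℝ}

/-- The density of the Cauchy `β`-ensemble in the coordinates `u i = log (x i)`, with `(x i - x j)²`
replaced by `regDistSq c (x i) (x j)`. The exponent of the latter is `β / 4` because the product
runs over ordered pairs of distinct indices. -/
noncomputable def logDensity (a b β c : ℝ) (u : ι → ℝ) : ℝ :=
  (∏ i, exp ((a + 1) * u i) * (1 + exp (u i)) ^ (-b)) *
    ∏ i, ∏ j ∈ ({i}ᶜ : Finset ι), regDistSq c (exp (u i)) (exp (u j)) ^ (β / 4)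

theorem logDensity_nonneg (a b β : ℝ) (hc : c ≤ 1) (u : ι → ℝ) : 0 ≤ logDensity a b β c u := by
  have hD (i j) := regDistSq_nonneg hc (exp_pos (u i)).le (exp_pos (u j)).le
  exact mul_nonneg (by positivity)
    (prod_nonneg fun i _ => prod_nonneg fun j _ => rpow_nonneg (hD i j) _)

theorem logDensity_comp_perm (a b β c : ℝ) (σ : Equiv.Perm ι) (u : ι → ℝ) :
    logDensity a b β c (u ∘ σ) = logDensity a b β c u := by
  unfold logDensity
  congr 1
  · exact Equiv.prod_comp σ fun i => exp ((a + 1) * u i) * (1 + exp (u i)) ^ (-b)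
  · refine Fintype.prod_equiv σ _ _ fun i => prod_equiv σ (fun j => by simp) fun j _ => rfl

theorem continuous_uncurry_logDensity (a b : ℝ) (hβ : 0 ≤ β) :
    Continuous fun p : ℝ × (ι → ℝ) => logDensity a b β p.1 p.2 := by
  have hpos (x : ℝ) : 1 + exp x ≠ 0 := by positivity
  unfold logDensity regDistSq
  refine .mul ?_ ?_
  · exact continuous_finsetProd _ fun i _ => .mul (by fun_prop)
      (.rpow_const (by fun_prop) fun p => .inl (hpos _))
  · exact continuous_finsetProd _ fun i _ => continuous_finsetProd _ fun j _ =>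
      .rpow_const (by fun_prop) fun p => .inr (by positivity)

theorem continuous_logDensity (a b c : ℝ) (hβ : 0 ≤ β) :
    Continuous (logDensity a b β c : (ι → ℝ) → ℝ) :=
  (continuous_uncurry_logDensity a b hβ).comp (.prodMk_right c)

theorem prod_regDistSq_rpow_le (hβ : 0 ≤ β) (hc : c ∈ Set.Icc (-1) 1) {x : ι → ℝ}
    (hx : ∀ i, 0 ≤ x i) :
    ∏ i, ∏ j ∈ ({i}ᶜ : Finset ι), regDistSq c (x i) (x j) ^ (β / 4) ≤
      ∏ i, (1 + x i) ^ ((Fintype.card ι - 1) * β) := by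
  have hD (i j) : 0 ≤ regDistSq c (x i) (x j) := regDistSq_nonneg hc.2 (hx i) (hx j)
  have h1x (i) : 0 < 1 + x i := by linarith [hx i]
  have hpair (i j) :
      regDistSq c (x i) (x j) ^ (β / 4) ≤ (1 + x i) ^ (β / 2) * (1 + x j) ^ (β / 2) :=
    calc regDistSq c (x i) (x j) ^ (β / 4)
        ≤ (((1 + x i) * (1 + x j)) ^ 2) ^ (β / 4) :=
          rpow_le_rpow (hD i j) (regDistSq_le_sq_mul_one_add hc.1 (hx i) (hx j)) (by positivity)
      _ = (1 + x i) ^ (β / 2) * (1 + x j) ^ (β / 2) := by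
          rw [← mul_rpow (h1x i).le (h1x j).le, ← rpow_natCast_mul (by positivity [h1x i, h1x j])]
          ring_nf
  calc ∏ i, ∏ j ∈ ({i}ᶜ : Finset ι), regDistSq c (x i) (x j) ^ (β / 4)
      ≤ ∏ i, ∏ j ∈ ({i}ᶜ : Finset ι), (1 + x i) ^ (β / 2) * (1 + x j) ^ (β / 2) :=
        prod_le_prod (fun i _ => prod_nonneg fun j _ => rpow_nonneg (hD i j) _) fun i _ =>
          prod_le_prod (fun j _ => rpow_nonneg (hD i j) _) fun j _ => hpair i j
    _ = ∏ i, (1 + x i) ^ ((Fintype.card ι - 1) * β) := by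
        simp only [prod_mul_distrib]
        rw [prod_prod_compl_singleton_comm fun _ j : ι => (1 + x j) ^ (β / 2), ← prod_mul_distrib]
        refine prod_congr rfl fun i _ => ?_
        rw [prod_const, ← rpow_mul_natCast (h1x i).le, ← rpow_add (h1x i),
          cast_card_compl_singleton i]
        ring_nf

theorem logDensity_le_prod (a b : ℝ) (hβ : 0 ≤ β) (hc : c ∈ Set.Icc (-1) 1) (u : ι → ℝ) :
    logDensity a b β c u ≤
      ∏ i, exp ((a + 1) * u i) * (1 + exp (u i)) ^ (-(b - (Fintype.card ι - 1) * β)) := by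
  calc logDensity a b β c u
      ≤ (∏ i, exp ((a + 1) * u i) * (1 + exp (u i)) ^ (-b)) *
          ∏ i, (1 + exp (u i)) ^ ((Fintype.card ι - 1) * β) := by
        exact mul_le_mul_of_nonneg_left
          (prod_regDistSq_rpow_le hβ hc fun i => (exp_pos (u i)).le) (by positivity)
    _ = _ := by
        rw [← prod_mul_distrib]
        refine prod_congr rfl fun i _ => ?_
        rw [mul_assoc, ← rpow_add (by positivity)]
        ring_nf

end LogDensity

section Integrability

theorem integrable_exp_mul_one_add_exp_rpow {s d : ℝ} (hs : 0 < s) (hd : s < d) :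
    Integrable fun t : ℝ => exp (s * t) * (1 + exp t) ^ (-d) := by
  have hcont : Continuous fun t : ℝ => exp (s * t) * (1 + exp t) ^ (-d) :=
    .mul (by fun_prop) (.rpow_const (by fun_prop) fun t => .inl (by positivity))
  have hIic : IntegrableOn (fun t : ℝ => exp (s * t) * (1 + exp t) ^ (-d)) (Set.Iic 0) :=
    (integrableOn_exp_mul_Iic hs 0).mono' hcont.aestronglyMeasurable (.of_forall fun t => by
      rw [norm_of_nonneg (by positivity)]
      exact mul_le_of_le_one_right (by positivity)
        (rpow_le_one_of_one_le_of_nonpos (by linarith [exp_pos t]) (by linarith)))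
  have hIoi : IntegrableOn (fun t : ℝ => exp (s * t) * (1 + exp t) ^ (-d)) (Set.Ioi 0) :=
    (integrableOn_exp_mul_Ioi (sub_neg.mpr hd) 0).mono' hcont.aestronglyMeasurable
      (.of_forall fun t => by
        rw [norm_of_nonneg (by positivity), show (s - d) * t = s * t + t * -d by ring, exp_add,
          exp_mul t]
        gcongr ?_ * ?_
        exact rpow_le_rpow_of_nonpos (exp_pos t) (by linarith) (by linarith))
  rw [← integrableOn_univ, ← Set.Iic_union_Ioi (a := (0 : ℝ))]
  exact hIic.union hIoi

variable {ι : Type*} [Fintype ι]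

theorem integrable_prod_exp_mul_one_add_exp_rpow {s d : ℝ} (hs : 0 < s) (hd : s < d) :
    Integrable fun u : ι → ℝ => ∏ i, exp (s * u i) * (1 + exp (u i)) ^ (-d) :=
  Integrable.fintype_prod fun _ => integrable_exp_mul_one_add_exp_rpow hs hd

variable [DecidableEq ι] {a b β c : ℝ}

theorem integrable_logDensity (ha : -1 < a) (hβ : 0 ≤ β) (hc : c ∈ Set.Icc (-1) 1)
    (hb : a + (Fintype.card ι - 1) * β + 1 < b) :
    Integrable (logDensity a b β c : (ι → ℝ) → ℝ) :=
  (integrable_prod_exp_mul_one_add_exp_rpow (s := a + 1) (d := b - (Fintype.card ι - 1) * β)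
    (by linarith) (by linarith)).mono'
    (continuous_logDensity a b c hβ).aestronglyMeasurable (.of_forall fun u => by
      rw [norm_of_nonneg (logDensity_nonneg a b β hc.2 u)]
      exact logDensity_le_prod a b hβ hc u)

theorem logDensity_one_pos (a b β : ℝ) {u : ι → ℝ} (hu : u.Injective) :
    0 < logDensity a b β 1 u := by
  refine mul_pos (by positivity) (prod_pos fun i _ => prod_pos fun j hj => rpow_pos_of_pos ?_ _)
  have hne : exp (u i) ≠ exp (u j) := fun h => by simp [hu (exp_injective h)] at hj
  rw [regDistSq_one]
  exact pow_two_pos_of_ne_zero (sub_ne_zero.mpr hne)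

theorem integral_logDensity_one_pos (ha : -1 < a) (hβ : 0 ≤ β)
    (hb : a + (Fintype.card ι - 1) * β + 1 < b) :
    0 < ∫ u : ι → ℝ, logDensity a b β 1 u := by
  let u₀ : ι → ℝ := fun i => Fintype.equivFin ι i
  have hu₀ : u₀.Injective := by
    simpa [u₀, Function.comp_def] using
      Nat.cast_injective.comp (Fin.val_injective.comp (Fintype.equivFin ι).injective)
  exact integral_pos_of_integrable_nonneg_nonzero (continuous_logDensity a b 1 hβ)
    (integrable_logDensity ha hβ (by simp) hb) (logDensity_nonneg a b β le_rfl)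
    (logDensity_one_pos a b β hu₀).ne'

end Integrability

section Moments

variable {ι : Type*} [Fintype ι]

theorem exp_sum_le_prod_one_add_exp (S : Finset ι) (u : ι → ℝ) :
    exp (∑ i ∈ S, u i) ≤ ∏ i, (1 + exp (u i)) := by
  classical
  rw [prod_one_add, exp_sum]
  exact single_le_sum (f := fun T : Finset ι => ∏ i ∈ T, exp (u i))
    (fun T _ => by positivity) (mem_powerset.mpr (subset_univ S))

variable [DecidableEq ι] {a b β c : ℝ}

/-- The unnormalised average of the monomial `∏ i ∈ S, x i`, where `x i = exp (u i)`. -/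
noncomputable def moment (a b β c : ℝ) (S : Finset ι) : ℝ :=
  ∫ u : ι → ℝ, exp (∑ i ∈ S, u i) * logDensity a b β c u

/-- The unnormalised average of the monomial `∏ i ∈ S, x i`, where `x i = exp (u i)`, times the
interaction force between the particles `m` and `j`. -/
noncomputable def pairMoment (a b β c : ℝ) (m j : ι) (S : Finset ι) : ℝ :=
  ∫ u : ι → ℝ, pairForce c (exp (u m)) (exp (u j)) *
    (exp (∑ i ∈ S, u i) * logDensity a b β c u)

theorem exp_sum_mul_logDensity_nonneg (a b β : ℝ) (hc : c ≤ 1) (S : Finset ι) (u : ι → ℝ) :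
    0 ≤ exp (∑ i ∈ S, u i) * logDensity a b β c u :=
  mul_nonneg (exp_pos _).le (logDensity_nonneg a b β hc u)

theorem continuous_exp_sum_mul_logDensity (a b c : ℝ) (hβ : 0 ≤ β) (S : Finset ι) :
    Continuous fun u : ι → ℝ => exp (∑ i ∈ S, u i) * logDensity a b β c u :=
  .mul (by fun_prop) (continuous_logDensity a b c hβ)

theorem exp_sum_mul_logDensity_le_prod (a b : ℝ) (hβ : 0 ≤ β) (hc : c ∈ Set.Icc (-1) 1)
    (S : Finset ι) (u : ι → ℝ) :
    exp (∑ i ∈ S, u i) * logDensity a b β c u ≤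
      ∏ i, exp ((a + 1) * u i) * (1 + exp (u i)) ^ (-(b - 1 - (Fintype.card ι - 1) * β)) :=
  calc exp (∑ i ∈ S, u i) * logDensity a b β c u
      ≤ (∏ i, (1 + exp (u i))) *
          ∏ i, exp ((a + 1) * u i) * (1 + exp (u i)) ^ (-(b - (Fintype.card ι - 1) * β)) :=
        mul_le_mul (exp_sum_le_prod_one_add_exp S u) (logDensity_le_prod a b hβ hc u)
          (logDensity_nonneg a b β hc.2 u) (by positivity)
    _ = _ := by
        rw [← prod_mul_distrib]
        refine prod_congr rfl fun i _ => ?_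
        rw [mul_left_comm, mul_comm (1 + _), ← rpow_add_one (by positivity)]
        ring_nf

theorem integrable_exp_sum_mul_logDensity (ha : -1 < a) (hβ : 0 ≤ β) (hc : c ∈ Set.Icc (-1) 1)
    (hb : a + (Fintype.card ι - 1) * β + 2 < b) (S : Finset ι) :
    Integrable fun u : ι → ℝ => exp (∑ i ∈ S, u i) * logDensity a b β c u :=
  (integrable_prod_exp_mul_one_add_exp_rpow (s := a + 1)
    (d := b - 1 - (Fintype.card ι - 1) * β) (by linarith) (by linarith)).mono'
    (continuous_exp_sum_mul_logDensity a b c hβ S).aestronglyMeasurable (.of_forall fun u => by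
      rw [norm_of_nonneg (exp_sum_mul_logDensity_nonneg a b β hc.2 S u)]
      exact exp_sum_mul_logDensity_le_prod a b hβ hc S u)

theorem tendsto_integral_mul_exp_sum_mul_logDensity (ha : -1 < a) (hβ : 0 ≤ β)
    (hb : a + (Fintype.card ι - 1) * β + 2 < b) (S : Finset ι) {k : ℝ → (ι → ℝ) → ℝ}
    (hk : ∀ c, Measurable (k c)) (hk_le : ∀ c ≤ 1, ∀ u, |k c u| ≤ 1)
    (hk_lim : ∀ᵐ u, Tendsto (fun c => k c u) (𝓝 1) (𝓝 1)) :
    Tendsto (fun c => ∫ u, k c u * (exp (∑ i ∈ S, u i) * logDensity a b β c u)) (𝓝[<] 1)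
      (𝓝 (moment a b β 1 S)) := by
  have hc : ∀ᶠ c : ℝ in 𝓝[<] 1, c ∈ Set.Icc (-1 : ℝ) 1 :=
    Filter.mem_of_superset (Ioo_mem_nhdsLT (by norm_num)) Set.Ioo_subset_Icc_self
  refine tendsto_integral_filter_of_dominated_convergence
    (fun u : ι → ℝ => ∏ i, exp ((a + 1) * u i) *
      (1 + exp (u i)) ^ (-(b - 1 - (Fintype.card ι - 1) * β)))
    (.of_forall fun c => (hk c).aestronglyMeasurable.mul
      (continuous_exp_sum_mul_logDensity a b c hβ S).aestronglyMeasurable) ?_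
    (integrable_prod_exp_mul_one_add_exp_rpow (by linarith) (by linarith)) ?_
  · filter_upwards [hc] with c hc
    refine .of_forall fun u => ?_
    rw [norm_mul, norm_of_nonneg (exp_sum_mul_logDensity_nonneg a b β hc.2 S u)]
    exact (mul_le_of_le_one_left (exp_sum_mul_logDensity_nonneg a b β hc.2 S u)
      (hk_le c hc.2 u)).trans (exp_sum_mul_logDensity_le_prod a b hβ hc S u)
  · filter_upwards [hk_lim] with u hu
    have hρ : Tendsto (fun c => logDensity a b β c u) (𝓝 1) (𝓝 (logDensity a b β 1 u)) :=
      ((continuous_uncurry_logDensity a b hβ).comp (.prodMk_left u)).tendsto 1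
    simpa using (hu.mul (hρ.const_mul _)).mono_left nhdsWithin_le_nhds

theorem tendsto_moment (ha : -1 < a) (hβ : 0 ≤ β) (hb : a + (Fintype.card ι - 1) * β + 2 < b)
    (S : Finset ι) : Tendsto (fun c => moment a b β c S) (𝓝[<] 1) (𝓝 (moment a b β 1 S)) := by
  simpa [moment] using tendsto_integral_mul_exp_sum_mul_logDensity ha hβ hb S (k := fun _ _ => 1)
    (fun _ => measurable_const) (by simp) (.of_forall fun _ => tendsto_const_nhds)

theorem moment_map_perm (a b β c : ℝ) (σ : Equiv.Perm ι) (S : Finset ι) :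
    moment a b β c (S.map σ.toEmbedding) = moment a b β c S := by
  rw [moment, moment, ← integral_comp_perm σ.symm]
  simp [logDensity_comp_perm]

theorem moment_insert_comm {S : Finset ι} {m j : ι} (hm : m ∉ S) (hj : j ∉ S) (a b β c : ℝ) :
    moment a b β c (insert j S) = moment a b β c (insert m S) := by
  rw [← map_swap_insert hm hj, moment_map_perm]

theorem pairMoment_map_perm (a b β c : ℝ) (σ : Equiv.Perm ι) (m j : ι) (S : Finset ι) :
    pairMoment a b β c (σ m) (σ j) (S.map σ.toEmbedding) = pairMoment a b β c m j S := by
  rw [pairMoment, pairMoment, ← integral_comp_perm σ.symm]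
  simp [logDensity_comp_perm]

theorem pairMoment_swap (a b β c : ℝ) (m j : ι) (S : Finset ι) :
    pairMoment a b β c j m S = -pairMoment a b β c m j S := by
  rw [pairMoment, pairMoment, ← integral_neg]
  refine integral_congr_ae (.of_forall fun u => ?_)
  dsimp only
  rw [pairForce_swap, neg_mul]

theorem pairMoment_map_swap (a b β c : ℝ) (m j : ι) (S : Finset ι) :
    pairMoment a b β c m j (S.map (Equiv.swap m j).toEmbedding) = -pairMoment a b β c m j S := by
  have h := pairMoment_map_perm a b β c (Equiv.swap m j) m j S
  rwa [Equiv.swap_apply_left, Equiv.swap_apply_right, pairMoment_swap, neg_eq_iff_eq_neg] at h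

theorem pairMoment_eq_zero {S : Finset ι} {m j : ι} (h : m ∈ S ↔ j ∈ S) (a b β c : ℝ) :
    pairMoment a b β c m j S = 0 := by
  have := pairMoment_map_swap a b β c m j S
  rw [map_swap_eq_self h] at this
  linarith

theorem integrable_pairForce_mul (ha : -1 < a) (hβ : 0 ≤ β) (hc : c ∈ Set.Ico 0 1)
    (hb : a + (Fintype.card ι - 1) * β + 2 < b) (m j : ι) (S : Finset ι) :
    Integrable fun u : ι → ℝ => pairForce c (exp (u m)) (exp (u j)) *
      (exp (∑ i ∈ S, u i) * logDensity a b β c u) :=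
  (integrable_exp_sum_mul_logDensity ha hβ ⟨by linarith [hc.1], hc.2.le⟩ hb S).bdd_mul
    (by unfold pairForce regDistSq; exact Measurable.aestronglyMeasurable (by fun_prop))
    (.of_forall fun u => abs_pairForce_le hc.1 hc.2)

theorem two_mul_pairMoment_insert (ha : -1 < a) (hβ : 0 ≤ β) (hc : c ∈ Set.Ico 0 1)
    (hb : a + (Fintype.card ι - 1) * β + 2 < b) {m j : ι} {S : Finset ι} (hm : m ∉ S)
    (hj : j ∉ S) :
    2 * pairMoment a b β c m j (insert m S) =
      (∫ u : ι → ℝ, (exp (u m) - exp (u j)) ^ 2 / regDistSq c (exp (u m)) (exp (u j)) *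
        (exp (∑ i ∈ insert m S, u i) * logDensity a b β c u)) +
      ∫ u : ι → ℝ, (exp (u m) - exp (u j)) ^ 2 / regDistSq c (exp (u m)) (exp (u j)) *
        (exp (∑ i ∈ insert j S, u i) * logDensity a b β c u) := by
  have hintegrable (T : Finset ι) : Integrable fun u : ι → ℝ =>
      (exp (u m) - exp (u j)) ^ 2 / regDistSq c (exp (u m)) (exp (u j)) *
        (exp (∑ i ∈ T, u i) * logDensity a b β c u) :=
    (integrable_exp_sum_mul_logDensity ha hβ ⟨by linarith [hc.1], hc.2.le⟩ hb T).bdd_mul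
      (by unfold regDistSq; exact Measurable.aestronglyMeasurable (by fun_prop))
      (.of_forall fun u => abs_sq_sub_div_regDistSq_le_one hc.2.le (exp_pos _).le (exp_pos _).le)
  have hanti : pairMoment a b β c m j (insert j S) = -pairMoment a b β c m j (insert m S) := by
    rw [← map_swap_insert hm hj, pairMoment_map_swap]
  rw [two_mul, ← sub_neg_eq_add, ← hanti, pairMoment, pairMoment,
    ← integral_sub (integrable_pairForce_mul ha hβ hc hb m j _)
      (integrable_pairForce_mul ha hβ hc hb m j _), ← integral_add (hintegrable _) (hintegrable _)]
  refine integral_congr_ae (.of_forall fun u => ?_)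
  simp only [sum_insert hm, sum_insert hj, exp_add]
  linear_combination exp (∑ i ∈ S, u i) * logDensity a b β c u *
    sub_mul_pairForce c (exp (u m)) (exp (u j))

theorem tendsto_pairMoment_insert (ha : -1 < a) (hβ : 0 ≤ β)
    (hb : a + (Fintype.card ι - 1) * β + 2 < b) {m j : ι} (hmj : m ≠ j) {S : Finset ι}
    (hm : m ∉ S) (hj : j ∉ S) :
    Tendsto (fun c => pairMoment a b β c m j (insert m S)) (𝓝[<] 1)
      (𝓝 (moment a b β 1 (insert m S))) := by
  have hlim (T : Finset ι) :
      Tendsto (fun c => ∫ u : ι → ℝ,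
        (exp (u m) - exp (u j)) ^ 2 / regDistSq c (exp (u m)) (exp (u j)) *
          (exp (∑ i ∈ T, u i) * logDensity a b β c u)) (𝓝[<] 1) (𝓝 (moment a b β 1 T)) := by
    refine tendsto_integral_mul_exp_sum_mul_logDensity ha hβ hb T
      (fun c => by unfold regDistSq; fun_prop)
      (fun c hc u => abs_sq_sub_div_regDistSq_le_one hc (exp_pos _).le (exp_pos _).le) ?_
    filter_upwards [ae_apply_ne_apply hmj] with u hu
    exact tendsto_sq_sub_div_regDistSq (exp_injective.ne hu)
  have hsum := ((hlim (insert m S)).add (hlim (insert j S))).const_mul (1 / 2)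
  rw [moment_insert_comm hm hj, ← two_mul, one_div, inv_mul_cancel_left₀ two_ne_zero] at hsum
  refine hsum.congr' ?_
  filter_upwards [Ico_mem_nhdsLT zero_lt_one] with c hc
  rw [← two_mul_pairMoment_insert ha hβ hc hb hm hj, inv_mul_cancel_left₀ two_ne_zero]

end Moments

section LoopEquation

theorem hasLineDerivAt_exp_sum {ι : Type*} (S : Finset ι) (u v : ι → ℝ) :
    HasLineDerivAt ℝ (fun u : ι → ℝ => exp (∑ i ∈ S, u i))
      (exp (∑ i ∈ S, u i) * ∑ i ∈ S, v i) u v := by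
  have h := (HasDerivAt.fun_sum fun i (_ : i ∈ S) =>
    ((hasDerivAt_id (0 : ℝ)).mul_const (v i)).const_add (u i)).exp
  simpa [HasLineDerivAt] using h

variable {ι : Type*} [Fintype ι] [DecidableEq ι] {a b β c : ℝ}

/-- The derivative of `log (logDensity a b β c u)` with respect to `u i`, for `c < 1`. -/
noncomputable def logForce (a b β c : ℝ) (u : ι → ℝ) (i : ι) : ℝ :=
  a + 1 - b * (exp (u i) / (1 + exp (u i))) +
    β / 2 * ∑ j ∈ ({i}ᶜ : Finset ι), (1 + pairForce c (exp (u i)) (exp (u j)))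

theorem hasDerivAt_log_regDistSq_exp {f g : ℝ → ℝ} {f' g' t : ℝ} (hf : HasDerivAt f f' t)
    (hg : HasDerivAt g g' t) (hc : c < 1) :
    HasDerivAt (fun s => Real.log (regDistSq c (exp (f s)) (exp (g s))))
      (f' + g' + (f' - g') * pairForce c (exp (f t)) (exp (g t))) t := by
  have hD : regDistSq c (exp (f t)) (exp (g t)) ≠ 0 :=
    (regDistSq_pos hc (exp_pos _) (exp_pos _)).ne'
  have h : HasDerivAt (fun s => regDistSq c (exp (f s)) (exp (g s))) _ t :=
    ((hf.exp.fun_pow 2).add (hg.exp.fun_pow 2)).sub ((hf.exp.const_mul (2 * c)).mul hg.exp)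
  convert h.log hD using 1
  rw [pairForce]
  field_simp
  simp only [regDistSq]
  ring

theorem sum_sum_add_add_sub_mul_pairForce (c : ℝ) (v x : ι → ℝ) :
    ∑ i, ∑ j ∈ ({i}ᶜ : Finset ι), (v i + v j + (v i - v j) * pairForce c (x i) (x j)) =
      2 * ∑ i, v i * ∑ j ∈ ({i}ᶜ : Finset ι), (1 + pairForce c (x i) (x j)) := by
  have h (i j) : v i + v j + (v i - v j) * pairForce c (x i) (x j) =
      v i * (1 + pairForce c (x i) (x j)) + v j * (1 + pairForce c (x j) (x i)) := by
    rw [pairForce_swap c (x i)]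
    ring
  have hcomm := sum_sum_compl_singleton_comm fun i j => v i * (1 + pairForce c (x i) (x j))
  simp only [h, sum_add_distrib, ← hcomm, ← mul_sum, two_mul]

theorem sum_mul_logForce (a b β c : ℝ) (u v : ι → ℝ) :
    ∑ i, v i * logForce a b β c u i =
      ∑ i, ((a + 1) * v i - b * (exp (u i) * v i / (1 + exp (u i)))) +
        β / 4 * ∑ i, ∑ j ∈ ({i}ᶜ : Finset ι),
          (v i + v j + (v i - v j) * pairForce c (exp (u i)) (exp (u j))) := by
  rw [sum_sum_add_add_sub_mul_pairForce c v fun i => exp (u i), ← mul_assoc, mul_sum,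
    ← sum_add_distrib]
  refine sum_congr rfl fun i _ => ?_
  rw [logForce]
  ring

theorem logDensity_eq_exp (a b β : ℝ) (hc : c < 1) (u : ι → ℝ) :
    logDensity a b β c u = exp (∑ i, ((a + 1) * u i - b * Real.log (1 + exp (u i))) +
      β / 4 * ∑ i, ∑ j ∈ ({i}ᶜ : Finset ι), Real.log (regDistSq c (exp (u i)) (exp (u j)))) := by
  have hone (i) : exp ((a + 1) * u i) * (1 + exp (u i)) ^ (-b) =
      exp ((a + 1) * u i - b * Real.log (1 + exp (u i))) := by
    rw [rpow_def_of_pos (by positivity), ← exp_add]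
    ring_nf
  have hpair (i j) : regDistSq c (exp (u i)) (exp (u j)) ^ (β / 4) =
      exp (β / 4 * Real.log (regDistSq c (exp (u i)) (exp (u j)))) := by
    rw [rpow_def_of_pos (regDistSq_pos hc (exp_pos _) (exp_pos _)), mul_comm]
  simp only [logDensity, hone, hpair, mul_sum, exp_add, exp_sum]

theorem hasLineDerivAt_logDensity (a b β : ℝ) (hc : c < 1) (u v : ι → ℝ) :
    HasLineDerivAt ℝ (logDensity a b β c) (logDensity a b β c u * ∑ i, v i * logForce a b β c u i)
      u v := by
  have hu (i) : HasDerivAt (fun t : ℝ => (u + t • v) i) (v i) 0 := by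
    simpa using ((hasDerivAt_id (0 : ℝ)).mul_const (v i)).const_add (u i)
  have hone (i) : HasDerivAt (fun t : ℝ => (a + 1) * (u + t • v) i -
      b * Real.log (1 + exp ((u + t • v) i)))
      ((a + 1) * v i - b * (exp (u i) * v i / (1 + exp (u i)))) 0 := by
    simpa using ((hu i).const_mul (a + 1)).fun_sub
      (((((hu i).exp).const_add 1).log (by positivity)).const_mul b)
  have hpair (i j) := hasDerivAt_log_regDistSq_exp (hu i) (hu j) hc
  have hlog := (HasDerivAt.fun_sum fun i (_ : i ∈ univ) => hone i).fun_add
    ((HasDerivAt.fun_sum fun i (_ : i ∈ univ) =>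
      HasDerivAt.fun_sum fun j (_ : j ∈ ({i}ᶜ : Finset ι)) => hpair i j).const_mul (β / 4))
  simpa only [HasLineDerivAt, logDensity_eq_exp a b β hc, sum_mul_logForce, zero_smul, add_zero]
    using hlog.exp

theorem hasLineDerivAt_exp_sum_mul_logDensity (a b β : ℝ) (hc : c < 1) (S : Finset ι)
    (u v : ι → ℝ) :
    HasLineDerivAt ℝ (fun u => exp (∑ i ∈ S, u i) * logDensity a b β c u)
      (exp (∑ i ∈ S, u i) * logDensity a b β c u *
        (∑ i ∈ S, v i + ∑ i, v i * logForce a b β c u i)) u v := by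
  have h := (hasLineDerivAt_exp_sum S u v).fun_mul (hasLineDerivAt_logDensity a b β hc u v)
  simp only [zero_smul, add_zero] at h
  exact h.congr_deriv (by ring)

theorem hasLineDerivAt_exp_sum_add_mul_logDensity (a b β : ℝ) (hc : c < 1) {m : ι} {S : Finset ι}
    (hm : m ∉ S) (u : ι → ℝ) :
    HasLineDerivAt ℝ
      (fun u => exp (∑ i ∈ S, u i) * logDensity a b β c u +
        exp (∑ i ∈ insert m S, u i) * logDensity a b β c u)
      ((a + 1) * (exp (∑ i ∈ S, u i) * logDensity a b β c u) +
        (a + 2 - b) * (exp (∑ i ∈ insert m S, u i) * logDensity a b β c u) +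
        β / 2 * ∑ j ∈ ({m}ᶜ : Finset ι), (exp (∑ i ∈ S, u i) * logDensity a b β c u +
          exp (∑ i ∈ insert m S, u i) * logDensity a b β c u +
          (pairForce c (exp (u m)) (exp (u j)) * (exp (∑ i ∈ S, u i) * logDensity a b β c u) +
          pairForce c (exp (u m)) (exp (u j)) *
            (exp (∑ i ∈ insert m S, u i) * logDensity a b β c u)))) u (Pi.single m 1) := by
  have hderiv (T : Finset ι) := hasLineDerivAt_exp_sum_mul_logDensity a b β hc T u (Pi.single m 1)
  refine HasDerivAt.congr_deriv ((hderiv S).fun_add (hderiv (insert m S))) ?_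
  have hforce : ∑ i, (Pi.single m 1 : ι → ℝ) i * logForce a b β c u i = logForce a b β c u m := by
    simp [Pi.single_apply]
  have hS : ∑ i ∈ S, (Pi.single m 1 : ι → ℝ) i = 0 := by simp [sum_pi_single', hm]
  rw [hforce, sum_insert hm, sum_insert hm, hS, exp_add, logForce, Pi.single_eq_same]
  have hfactor (A B κ : ℝ) : A + B + (κ * A + κ * B) = (A + B) * (1 + κ) := by ring
  simp only [hfactor, ← mul_sum]
  field_simp
  ring

theorem loop_equation (ha : -1 < a) (hβ : 0 ≤ β) (hc : c ∈ Set.Ico 0 1)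
    (hb : a + (Fintype.card ι - 1) * β + 2 < b) {m : ι} {S : Finset ι} (hm : m ∉ S) :
    (a + 1) * moment a b β c S + (a + 2 - b) * moment a b β c (insert m S) +
      β / 2 * ∑ j ∈ ({m}ᶜ : Finset ι), (moment a b β c S + moment a b β c (insert m S) +
        (pairMoment a b β c m j S + pairMoment a b β c m j (insert m S))) = 0 := by
  have hP (T : Finset ι) :=
    integrable_exp_sum_mul_logDensity ha hβ ⟨by linarith [hc.1], hc.2.le⟩ hb T
  have hK (j : ι) (T : Finset ι) := integrable_pairForce_mul ha hβ hc hb m j T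
  have hPP := (hP S).fun_add (hP (insert m S))
  have hKK (j : ι) := (hK j S).fun_add (hK j (insert m S))
  have hone := ((hP S).const_mul (a + 1)).fun_add ((hP (insert m S)).const_mul (a + 2 - b))
  have hpair (j : ι) := hPP.fun_add (hKK j)
  have hsum := (integrable_finsetSum ({m}ᶜ : Finset ι) fun j _ => hpair j).const_mul (β / 2)
  have h := integral_eq_zero_of_hasLineDerivAt hPP (hone.fun_add hsum)
    (hasLineDerivAt_exp_sum_add_mul_logDensity a b β hc.2 hm)
  rw [integral_add hone hsum, integral_add ((hP S).const_mul _) ((hP _).const_mul _),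
    integral_const_mul, integral_const_mul, integral_const_mul,
    integral_finsetSum _ fun j _ => hpair j] at h
  simpa only [moment, pairMoment, integral_add hPP (hKK _), integral_add (hP S) (hP _),
    integral_add (hK _ S) (hK _ _)] using h

end LoopEquation

section Recursion

variable {ι : Type*} [Fintype ι] [DecidableEq ι] {a b β : ℝ}

theorem tendsto_pairMoment_add_pairMoment_insert (ha : -1 < a) (hβ : 0 ≤ β)
    (hb : a + (Fintype.card ι - 1) * β + 2 < b) {m j : ι} (hmj : m ≠ j) {S : Finset ι}
    (hm : m ∉ S) :
    Tendsto (fun c => pairMoment a b β c m j S + pairMoment a b β c m j (insert m S)) (𝓝[<] 1)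
      (𝓝 (if j ∈ S then -moment a b β 1 S else moment a b β 1 (insert m S))) := by
  split_ifs with hj
  · have h := tendsto_pairMoment_insert ha hβ hb hmj.symm (notMem_erase j S)
      (fun h => hm (mem_of_mem_erase h))
    rw [insert_erase hj] at h
    refine h.neg.congr fun c => ?_
    rw [pairMoment_eq_zero (S := insert m S) (by simp [hj]), add_zero, pairMoment_swap, neg_neg]
  · refine (tendsto_pairMoment_insert ha hβ hb hmj hm hj).congr fun c => ?_
    rw [pairMoment_eq_zero (iff_of_false hm hj), zero_add]

theorem moment_insert_recursion (ha : -1 < a) (hβ : 0 ≤ β)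
    (hb : a + (Fintype.card ι - 1) * β + 2 < b) {m : ι} {S : Finset ι} (hm : m ∉ S) :
    (a + 1 + (Fintype.card ι - (#S + 1)) * β / 2) * moment a b β 1 S =
      (b - a - 2 - (2 * Fintype.card ι - (#S + 1) - 1) * β / 2) * moment a b β 1 (insert m S) := by
  set M := moment a b β 1 S
  set M' := moment a b β 1 (insert m S)
  have hS := tendsto_moment ha hβ hb S
  have hS' := tendsto_moment ha hβ hb (insert m S)
  have hlim := ((hS.const_mul (a + 1)).add (hS'.const_mul (a + 2 - b))).add
    ((tendsto_finsetSum ({m}ᶜ : Finset ι) fun j hj => (hS.add hS').add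
      (tendsto_pairMoment_add_pairMoment_insert ha hβ hb
        (ne_of_mem_of_not_mem (mem_singleton_self m) (mem_compl.mp hj)) hm)).const_mul (β / 2))
  have hzero : (a + 1) * M + (a + 2 - b) * M' +
      β / 2 * ∑ j ∈ ({m}ᶜ : Finset ι), (M + M' + if j ∈ S then -M else M') = 0 :=
    tendsto_nhds_unique hlim <| tendsto_const_nhds.congr' <| by
      filter_upwards [Ico_mem_nhdsLT zero_lt_one] with c hc
      exact (loop_equation ha hβ hc hb hm).symm
  have hsum : ∑ j ∈ ({m}ᶜ : Finset ι), (M + M' + if j ∈ S then -M else M') =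
      (Fintype.card ι - 1) * (M + 2 * M') - #S * (M + M') := by
    have hterm (j : ι) : (M + M' + if j ∈ S then -M else M') =
        M + 2 * M' - if j ∈ S then M + M' else 0 := by
      split_ifs <;> ring
    have hSm : ({m}ᶜ : Finset ι) ∩ S = S :=
      inter_eq_right.mpr fun j hj => by
        simpa using ne_of_mem_of_not_mem hj hm
    simp only [hterm, sum_sub_distrib, sum_ite_mem, hSm, sum_const, nsmul_eq_mul,
      cast_card_compl_singleton]
  rw [hsum] at hzero
  linear_combination hzero

theorem moment_eq_moment_empty_mul_prod (ha : -1 < a) (hβ : 0 ≤ β)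
    (hb : a + (Fintype.card ι - 1) * β + 2 < b) (S : Finset ι) :
    moment a b β 1 S = moment a b β 1 (∅ : Finset ι) *
      ∏ j ∈ range #S, (a + 1 + (Fintype.card ι - (j + 1)) * β / 2) /
        (b - a - 2 - (2 * Fintype.card ι - (j + 1) - 1) * β / 2) := by
  induction S using Finset.induction_on with
  | empty => simp
  | insert m S hm ih =>
    have hden : 0 < b - a - 2 - (2 * Fintype.card ι - (#S + 1) - 1) * β / 2 := by
      nlinarith [mul_nonneg (Nat.cast_nonneg (α := ℝ) #S) hβ]
    rw [card_insert_of_notMem hm, prod_range_succ, ← mul_assoc, ← ih, ← mul_div_assoc,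
      eq_div_iff hden.ne']
    linear_combination -moment_insert_recursion ha hβ hb hm

end Recursion

section CauchyEnsemble

theorem interaction_eq_prod_compl (N : ℕ) (β : ℝ) (x : Fin N → ℝ) :
    interaction N β x = ∏ i, ∏ j ∈ ({i}ᶜ : Finset (Fin N)), regDistSq 1 (x i) (x j) ^ (β / 4) := by
  rw [← prod_prod_Ioi_mul_eq_prod_prod_off_diag fun j i => regDistSq 1 (x i) (x j) ^ (β / 4),
    interaction, prod_finset_product _ univ Ioi (by simp)]
  refine prod_congr rfl fun i _ => prod_congr rfl fun j _ => ?_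
  have habs : |x j - x i| ^ β = (|x j - x i| ^ (β / 2)) ^ 2 := by
    rw [← rpow_mul_natCast (abs_nonneg _)]
    ring_nf
  have hquarter : regDistSq 1 (x i) (x j) ^ (β / 4) = |x j - x i| ^ (β / 2) := by
    rw [regDistSq_one, abs_sub_comm, ← sq_abs, ← rpow_natCast_mul (abs_nonneg _)]
    ring_nf
  rw [regDistSq_comm 1 (x j), hquarter, habs, sq]

theorem prod_exp_mul_cauchyWeight_eq_logDensity (N : ℕ) (a b β : ℝ) (u : Fin N → ℝ) :
    (∏ i, exp (u i)) * ((∏ i, exp (u i) ^ a * (1 + exp (u i)) ^ (-b)) *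
      interaction N β fun i => exp (u i)) = logDensity a b β 1 u := by
  rw [logDensity, interaction_eq_prod_compl, ← mul_assoc, ← prod_mul_distrib]
  congr! 2 with i
  rw [← exp_mul, ← mul_assoc, ← exp_add]
  ring_nf

theorem setIntegral_mul_cauchyWeight (N : ℕ) (a b β : ℝ) (f : (Fin N → ℝ) → ℝ) :
    ∫ x in Set.univ.pi (fun _ : Fin N => Set.Ioi (0 : ℝ)),
        f x * ((∏ i, x i ^ a * (1 + x i) ^ (-b)) * interaction N β x) =
      ∫ u : Fin N → ℝ, f (fun i => exp (u i)) * logDensity a b β 1 u := by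
  rw [setIntegral_pi_Ioi_eq_integral_exp]
  simp only [smul_eq_mul, mul_left_comm _ (f _), prod_exp_mul_cauchyWeight_eq_logDensity]

theorem setIntegral_cauchyWeight (N : ℕ) (a b β : ℝ) :
    ∫ x in Set.univ.pi (fun _ : Fin N => Set.Ioi (0 : ℝ)),
        (∏ i, x i ^ a * (1 + x i) ^ (-b)) * interaction N β x =
      moment a b β 1 (∅ : Finset (Fin N)) := by
  simpa [moment] using setIntegral_mul_cauchyWeight N a b β fun _ => 1

theorem setIntegral_esym_mul_cauchyWeight {a b β : ℝ} {N : ℕ} (l : ℕ) (ha : -1 < a) (hβ : 0 ≤ β)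
    (hb : a + ((N : ℝ) - 1) * β + 2 < b) :
    ∫ x in Set.univ.pi (fun _ : Fin N => Set.Ioi (0 : ℝ)),
        esym N l x * ((∏ i, x i ^ a * (1 + x i) ^ (-b)) * interaction N β x) =
      ∑ S ∈ powersetCard l (univ : Finset (Fin N)), moment a b β 1 S := by
  rw [setIntegral_mul_cauchyWeight]
  simp only [esym, ← exp_sum, sum_mul]
  exact integral_finsetSum _ fun S _ =>
    integrable_exp_sum_mul_logDensity ha hβ (by simp) (by simpa using hb) S

end CauchyEnsemble

theorem cauchy_beta_ensemble_average_esym_general (β : ℝ) (hβ : 0 ≤ β) (N l : ℕ) (a b : ℝ)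
    (ha : -1 < a) (hb : a + ((N : ℝ) - 1) * β + (min l 1 : ℕ) + 1 < b) :
    (∫ x in Set.univ.pi (fun _ : Fin N => Set.Ioi (0 : ℝ)),
        esym N l x * ((∏ i, x i ^ a * (1 + x i) ^ (-b)) * interaction N β x)) /
      (∫ x in Set.univ.pi (fun _ : Fin N => Set.Ioi (0 : ℝ)),
        (∏ i, x i ^ a * (1 + x i) ^ (-b)) * interaction N β x)
      = (N.choose l : ℝ) *
          ∏ j ∈ Finset.range l,
            (a + 1 + ((N : ℝ) - (j + 1)) * β / 2) /
              (b - a - 2 - (2 * (N : ℝ) - (j + 1) - 1) * β / 2) := by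
  have hpos : 0 < moment a b β 1 (∅ : Finset (Fin N)) := by
    have hb₀ : a + (Fintype.card (Fin N) - 1) * β + 1 < b := by
      rw [Fintype.card_fin]
      linarith [Nat.cast_nonneg (α := ℝ) (min l 1)]
    simpa [moment] using integral_logDensity_one_pos ha hβ hb₀
  rcases Nat.eq_zero_or_pos l with rfl | hl
  · simpa [esym, setIntegral_cauchyWeight] using div_self hpos.ne'
  have hb₁ : a + ((N : ℝ) - 1) * β + 2 < b := by
    rw [min_eq_right hl, Nat.cast_one] at hb
    linarith
  have hmoment (S) (hS : S ∈ powersetCard l (univ : Finset (Fin N))) :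
      moment a b β 1 S = moment a b β 1 (∅ : Finset (Fin N)) * ∏ j ∈ range l,
        (a + 1 + (N - (j + 1)) * β / 2) / (b - a - 2 - (2 * N - (j + 1) - 1) * β / 2) := by
    simpa [(mem_powersetCard.mp hS).2] using
      moment_eq_moment_empty_mul_prod ha hβ (by simpa using hb₁) S
  rw [setIntegral_cauchyWeight, setIntegral_esym_mul_cauchyWeight l ha hβ hb₁, div_eq_iff hpos.ne',
    sum_congr rfl hmoment, sum_const, card_powersetCard, card_univ, Fintype.card_fin, nsmul_eq_mul]
  ring

/-- The Cauchy-type `β`-ensemble average of the `l`-th elementary symmetric polynomial: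
`⟨e_l⟩ = C(N,l) ∏_{j=1}^{l} (a + 1 + (N-j)β/2)/(b - a - 2 - (2N-j-1)β/2)`. -/
theorem cauchy_beta_ensemble_average_esym (β : ℝ) (hβ : 0 < β) (N : ℕ) (hN : 0 < N)
    (l : ℕ) (hl : l ≤ N) (a b : ℝ) (ha : -1 < a)
    (hb : a + ((N : ℝ) - 1) * β + l + 1 < b) :
    (∫ x in Set.univ.pi (fun _ : Fin N => Set.Ioi (0 : ℝ)),
        esym N l x * ((∏ i, x i ^ a * (1 + x i) ^ (-b)) * interaction N β x)) /
      (∫ x in Set.univ.pi (fun _ : Fin N => Set.Ioi (0 : ℝ)),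
        (∏ i, x i ^ a * (1 + x i) ^ (-b)) * interaction N β x)
      = (N.choose l : ℝ) *
          ∏ j ∈ Finset.range l,
            (a + 1 + ((N : ℝ) - (j + 1)) * β / 2) /
              (b - a - 2 - (2 * (N : ℝ) - (j + 1) - 1) * β / 2) := by
  exact cauchy_beta_ensemble_average_esym_general β hβ.le N l a b ha <| by
    linarith [Nat.cast_le (α := ℝ).mpr (min_le_left l 1)]
end
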